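/- Let (Σ, σ) be a shift of finite type, let μ be a σ-invariant Borel probability measure on Σ with h_μ(σ) > 0, let ρ: Σ → (0,∞) be a continuous function, and set h* = h_μ(σ)/∫ρ dμ. Then for every c ∈ (0, h*) there exists a σ-invariant Borel probability measure ν on Σ such that: (1) h_ν(σ) = c · ∫ρ dν, and (2) the subsystem (Y, σ), where Y = supp ν, is strictly ergodic. -/

import Mathlib

/-!
The measure `ν` lives on the intersection of a decreasing sequence of systems of free
concatenations, built inside the shift of finite type `S`.

A shift of finite type glues: two points of `S` that agree on a word of a fixed length `L` can be
spliced along it (`sft_glues`). Hence loops at a word `u` of length `L` can be concatenated freely.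
Since `c ∫ ρ dμ < h_μ`, there are, by pigeonhole on a code for typical words, a word `u` and a
family `W 0` of loops at `u` of common length whose logarithmic cardinality exceeds `c` times every
Birkhoff sum of `ρ` along a member (`exists_stage`).

Given `W k`, concatenate all its words, each used exactly once, in all possible orders. There are
about `|W k|!` such words, so that because of the excess of the previous step one can keep a
subfamily `W (k + 1)` with
`log |W (k + 1)| = c * ∑ w ∈ W k, (Birkhoff sum of ρ over w) + O(1)`, and the excess persists
(`exists_tower`). Every word of `W (k + 1)` is a permutation of the words of `W k`, so Birkhoff
averages of a continuous function over all of them nearly agree, with an error tending to `0`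
(`Tower.averages`). Therefore Birkhoff averages converge uniformly on the limit system `towerSet`,
which makes it uniquely ergodic and makes the support of its invariant measure `ν` minimal
(`strictlyErgodic_of_averages`).

Comparing `log |W (k + 1)|` with the Birkhoff sums of `ρ` shows that `log |W k| / n k` tends to
`c ∫ ρ dν` (`Tower.log_card`). This number bounds the entropy of `ν` from above since points of the
limit system are concatenations of words of `W k` (`Tower.refinedInfo_le`). It bounds the entropy
from below because all words of `W k` have nearly the statistics of `ν`: coding their `q`-blocks by
the frequencies under `ν` costs about `H_q / q` per symbol, where `H_q` is the entropy of the
partition into `q`-cylinders, and by Kraft's inequality the cost is at least `log |W k| / n k`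
(`Tower.le_refinedInfo`).
-/

open Filter MeasureTheory Set Topology
open scoped ENNReal NNReal

attribute [local instance] PiCountable.metricSpace

namespace EF

/-! ### Topological entropy via separated sets -/

section Entropy

variable {M : Type*} [MetricSpace M]

/-- `Q` is an `(n,ε)`-separated set for `f`. -/
def IsDynSep (f : M → M) (n : ℕ) (ε : ℝ) (Q : Set M) : Prop :=
  Q.Pairwise fun x y => ∃ j : ℕ, j ≤ n ∧ ε < dist (f^[j] x) (f^[j] y)

/-- Maximal cardinality of an `(n,ε)`-separated subset of `K`. -/
noncomputable def sepCount (f : M → M) (K : Set M) (n : ℕ) (ε : ℝ) : ℕ :=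
  sSup {k : ℕ | ∃ Q : Finset M, ↑Q ⊆ K ∧ IsDynSep f n ε ↑Q ∧ Q.card = k}

/-- Topological entropy of `f` on the (not necessarily invariant) set `K`. -/
noncomputable def topEntropyOn (f : M → M) (K : Set M) : EReal :=
  ⨆ (ε : ℝ) (_ : 0 < ε),
    Filter.atTop.limsup fun n : ℕ => ((Real.log (sepCount f K n ε) / n : ℝ) : EReal)

/-- Topological entropy of `f`. -/
noncomputable def topEntropy (f : M → M) : EReal :=
  topEntropyOn f Set.univ

end Entropy

/-! ### Measure-theoretic (Kolmogorov–Sinai) entropy -/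

section MeasEntropy

variable {α : Type*} [MeasurableSpace α]

/-- A finite measurable partition of the whole space. -/
def IsMeasPartition (P : Finset (Set α)) : Prop :=
  (∀ p ∈ P, MeasurableSet p) ∧ ⋃₀ (↑P : Set (Set α)) = Set.univ ∧
    (↑P : Set (Set α)).Pairwise Disjoint

/-- The function `x ↦ - x log x`. -/
noncomputable def negMulLog (x : ℝ) : ℝ := -(x * Real.log x)

/-- Information of the refinement `P ∨ f⁻¹ P ∨ ⋯ ∨ f⁻⁽ⁿ⁻¹⁾ P` with respect to `μ`. -/
noncomputable def refinedInfo (f : α → α) (μ : Measure α) (P : Finset (Set α)) (n : ℕ) : ℝ :=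
  ∑ a : Fin n → {p // p ∈ P},
    negMulLog (μ (⋂ i : Fin n, f^[(i : ℕ)] ⁻¹' ((a i : Set α)))).toReal

/-- Entropy of `f` w.r.t. `μ` and the partition `P`. -/
noncomputable def partEntropy (f : α → α) (μ : Measure α) (P : Finset (Set α)) : ℝ :=
  Filter.atTop.limsup fun n : ℕ => refinedInfo f μ P n / n

/-- Kolmogorov–Sinai entropy of `f` with respect to `μ`. -/
noncomputable def measEntropy (f : α → α) (μ : Measure α) : EReal :=
  ⨆ (P : Finset (Set α)) (_ : IsMeasPartition P), ((partEntropy f μ P : ℝ) : EReal)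

end MeasEntropy

/-! ### Discrete-time dynamics -/

section Discrete

variable {M : Type*} [MetricSpace M]

/-- A set invariant under `f`. -/
def InvSet (f : M → M) (Λ : Set M) : Prop := f '' Λ = Λ

/-- `f` is minimal on the invariant set `Λ`. -/
def MinimalOn (f : M → M) (Λ : Set M) : Prop :=
  ∀ K : Set M, K ⊆ Λ → K.Nonempty → IsClosed K → f '' K = K → K = Λ

variable [MeasurableSpace M]

/-- `f` is uniquely ergodic on `Λ`: there is exactly one invariant Borel probability
measure supported in `Λ`. -/
def UniquelyErgodicOn (f : M → M) (Λ : Set M) : Prop :=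
  ∃! μ : Measure M, IsProbabilityMeasure μ ∧ MeasurePreserving f μ μ ∧ μ Λᶜ = 0

/-- `f` is strictly ergodic on `Λ`: minimal and uniquely ergodic. -/
def StrictlyErgodicOn (f : M → M) (Λ : Set M) : Prop :=
  MinimalOn f Λ ∧ UniquelyErgodicOn f Λ

/-- Entropy flexibility of `f` on an invariant set `S`. -/
def EntropyFlexibleOn (f : M → M) (S : Set M) : Prop :=
  ∀ c : ℝ, 0 ≤ c → (c : EReal) < topEntropyOn f S →
    ∃ (μ : Measure M) (Λ : Set M), IsProbabilityMeasure μ ∧ Ergodic f μ ∧ μ Sᶜ = 0 ∧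
      Λ ⊆ S ∧ IsCompact Λ ∧ f '' Λ = Λ ∧
      topEntropyOn f Λ = (c : EReal) ∧ measEntropy f μ = (c : EReal)

/-- Entropy flexibility of `f` (on the whole space). -/
def EntropyFlexible (f : M → M) : Prop :=
  ∀ c : ℝ, 0 ≤ c → (c : EReal) < topEntropy f →
    ∃ (μ : Measure M) (Λ : Set M), IsProbabilityMeasure μ ∧ Ergodic f μ ∧
      IsCompact Λ ∧ f '' Λ = Λ ∧
      topEntropyOn f Λ = (c : EReal) ∧ measEntropy f μ = (c : EReal)

end Discrete

/-! ### Shadowing and expansiveness (discrete time) -/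

section Shadowing

variable {M : Type*} [MetricSpace M]

/-- The shadowing property for a homeomorphism `f` (full orbits indexed by `ℤ`,
encoded via orbit functions `z` with `z (n+1) = f (z n)`). -/
def ShadowingProperty (f : M → M) : Prop :=
  ∀ ε : ℝ, 0 < ε → ∃ δ : ℝ, 0 < δ ∧ ∀ x : ℤ → M,
    (∀ n : ℤ, dist (f (x n)) (x (n + 1)) ≤ δ) →
    ∃ z : ℤ → M, (∀ n : ℤ, z (n + 1) = f (z n)) ∧ ∀ n : ℤ, dist (z n) (x n) ≤ ε

/-- The shadowing property relative to an invariant set `Λ`. -/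
def ShadowingOn (f : M → M) (Λ : Set M) : Prop :=
  ∀ ε : ℝ, 0 < ε → ∃ δ : ℝ, 0 < δ ∧ ∀ x : ℤ → M, (∀ n : ℤ, x n ∈ Λ) →
    (∀ n : ℤ, dist (f (x n)) (x (n + 1)) ≤ δ) →
    ∃ z : ℤ → M, (∀ n : ℤ, z n ∈ Λ) ∧ (∀ n : ℤ, z (n + 1) = f (z n)) ∧
      ∀ n : ℤ, dist (z n) (x n) ≤ ε

/-- Expansiveness of a homeomorphism, phrased via full orbit functions. -/
def Expansive (f : M → M) : Prop :=
  ∃ e : ℝ, 0 < e ∧ ∀ z w : ℤ → M,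
    (∀ n : ℤ, z (n + 1) = f (z n)) → (∀ n : ℤ, w (n + 1) = f (w n)) →
    (∀ n : ℤ, dist (z n) (w n) ≤ e) → z 0 = w 0

/-- Topological transitivity of `f` on `Λ`. -/
def TransitiveOn (f : M → M) (Λ : Set M) : Prop :=
  ∀ U V : Set M, IsOpen U → IsOpen V → (U ∩ Λ).Nonempty → (V ∩ Λ).Nonempty →
    ∃ n : ℕ, 0 < n ∧ ((f^[n] '' (U ∩ Λ)) ∩ V).Nonempty

end Shadowing

/-! ### Continuous-time dynamics -/

section Flows

variable {M : Type*} [MetricSpace M]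

/-- A set invariant under all time-`t` maps of the flow. -/
def FlowInvSet (φ : Flow ℝ M) (Λ : Set M) : Prop := ∀ t : ℝ, φ.toFun t '' Λ = Λ

/-- Topological entropy of a flow on a set: entropy of its time-one map. -/
noncomputable def flowTopEntropyOn (φ : Flow ℝ M) (K : Set M) : EReal :=
  topEntropyOn (φ.toFun 1) K

/-- Topological entropy of a flow: the entropy of its time-one map. -/
noncomputable def flowTopEntropy (φ : Flow ℝ M) : EReal := topEntropy (φ.toFun 1)

/-- Minimality of a flow on `Λ`. -/
def FlowMinimalOn (φ : Flow ℝ M) (Λ : Set M) : Prop :=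
  ∀ K : Set M, K ⊆ Λ → K.Nonempty → IsClosed K → (∀ t : ℝ, φ.toFun t '' K = K) → K = Λ

variable [MeasurableSpace M]

/-- An invariant measure for a flow. -/
def FlowInvariant (φ : Flow ℝ M) (μ : Measure M) : Prop :=
  ∀ t : ℝ, MeasurePreserving (φ.toFun t) μ μ

/-- An ergodic measure for a flow. -/
def FlowErgodic (φ : Flow ℝ M) (μ : Measure M) : Prop :=
  FlowInvariant φ μ ∧
    ∀ s : Set M, MeasurableSet s → (∀ t : ℝ, φ.toFun t ⁻¹' s = s) → μ s = 0 ∨ μ s = 1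

/-- Measure-theoretic entropy of a flow: entropy of the time-one map. -/
noncomputable def flowMeasEntropy (φ : Flow ℝ M) (μ : Measure M) : EReal :=
  measEntropy (φ.toFun 1) μ

/-- Unique ergodicity of a flow on `Λ`. -/
def FlowUniquelyErgodicOn (φ : Flow ℝ M) (Λ : Set M) : Prop :=
  ∃! μ : Measure M, IsProbabilityMeasure μ ∧ FlowInvariant φ μ ∧ μ Λᶜ = 0

/-- Strict ergodicity of a flow on `Λ`. -/
def FlowStrictlyErgodicOn (φ : Flow ℝ M) (Λ : Set M) : Prop :=
  FlowMinimalOn φ Λ ∧ FlowUniquelyErgodicOn φ Λ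

/-- Entropy flexibility for flows. -/
def FlowEntropyFlexible (φ : Flow ℝ M) : Prop :=
  ∀ c : ℝ, 0 ≤ c → (c : EReal) < flowTopEntropy φ →
    ∃ (μ : Measure M) (Λ : Set M), IsProbabilityMeasure μ ∧ FlowErgodic φ μ ∧
      IsCompact Λ ∧ FlowInvSet φ Λ ∧
      flowTopEntropyOn φ Λ = (c : EReal) ∧ flowMeasEntropy φ μ = (c : EReal)

end Flows

/-! ### Suspension flows -/

section Suspension

variable {X : Type*} [MetricSpace X] {Λ : Type*} [MetricSpace Λ]

/-- `φ` (a flow on `Λ`) is, on the subset `Γ ⊆ Λ`, the suspension flow of the base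
map `f` restricted to `S ⊆ X` under the roof function `ρ`, witnessed by the
embedding `e : X → Λ` of the base. This characterizes the quotient of `S × ℝ` by
`(x, ρ x) ∼ (f x, 0)` with the unit-speed vertical flow. -/
def IsSuspensionOn (f : X → X) (S : Set X) (ρ : X → ℝ) (φ : Flow ℝ Λ) (Γ : Set Λ) : Prop :=
  ∃ e : X → Λ, ContinuousOn e S ∧ (∀ x ∈ S, e x ∈ Γ) ∧
    (∀ x ∈ S, φ.toFun (ρ x) (e x) = e (f x)) ∧
    (∀ z ∈ Γ, ∃ x ∈ S, ∃ s : ℝ, 0 ≤ s ∧ s < ρ x ∧ φ.toFun s (e x) = z) ∧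
    (∀ x ∈ S, ∀ y ∈ S, ∀ s u : ℝ, 0 ≤ s → s < ρ x → 0 ≤ u → u < ρ y →
      φ.toFun s (e x) = φ.toFun u (e y) → x = y ∧ s = u)

end Suspension

/-! ### Symbolic dynamics -/

section Symbolic

/-- The full shift map on `ℤ → A`. -/
def fullShift (A : Type*) : (ℤ → A) → (ℤ → A) := fun x i => x (i + 1)

variable {A : Type*} [MetricSpace A]

/-- A subshift: a closed shift-invariant subset of the full shift. -/
def IsSubshift (S : Set (ℤ → A)) : Prop :=
  IsClosed S ∧ fullShift A '' S = S

/-- The vertex shift determined by a transition relation `Adj`. -/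
def vertexShift {B : Type*} (Adj : B → B → Prop) : Set (ℤ → B) :=
  {x | ∀ i : ℤ, Adj (x i) (x (i + 1))}

/-- A topological conjugacy between two shift spaces (over possibly different
alphabets): a homeomorphism of the subspaces intertwining the shift maps. -/
def ShiftConj {B : Type*} [mB : MetricSpace B] (S : Set (ℤ → A)) (T : Set (ℤ → B)) : Prop :=
  ∃ h : ↥S ≃ₜ ↥T, ∀ x y : ↥S, (y : ℤ → A) = fullShift A (x : ℤ → A) →
    ((h y : ℤ → B)) = fullShift B ((h x : ℤ → B))

/-- A subshift of finite type: a subshift topologically conjugate to a vertex shift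
over some finite alphabet. -/
def IsSFT [Fintype A] (S : Set (ℤ → A)) : Prop :=
  IsSubshift S ∧ ∃ (B : Type) (_ : Fintype B) (mB : MetricSpace B) (Adj : B → B → Prop),
    @ShiftConj A _ B mB S (vertexShift Adj)

/-- The word `w` occurs in some point of `S`. -/
def occursIn (w : List A) (S : Set (ℤ → A)) : Prop :=
  ∃ x ∈ S, ∃ a : ℤ, ∀ i : Fin w.length, x (a + (i : ℕ)) = w.get i

/-- The words of length `s` in the language of `S`. -/
def langOf (s : ℕ) (S : Set (ℤ → A)) : Set (List A) :=
  {w | w.length = s ∧ occursIn w S}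

/-- `r` is a parsing of `x` into words from `𝒲`. -/
def ParsesAt (x : ℤ → A) (𝒲 : Finset (List A)) (r : ℤ → ℤ) : Prop :=
  ∀ j : ℤ, ∃ w ∈ 𝒲, r (j + 1) = r j + w.length ∧
    ∀ i : Fin w.length, x (r j + (i : ℕ)) = w.get i

/-- The renewal system over a finite set of words `𝒲`: all bi-infinite free
concatenations of words from `𝒲`. -/
def renewalSet (𝒲 : Finset (List A)) : Set (ℤ → A) :=
  {x | ∃ r : ℤ → ℤ, ParsesAt x 𝒲 r}

end Symbolic

/-! ### Horseshoes for flows -/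

section Horseshoe

variable {M : Type*} [MetricSpace M]

/-- Auxiliary: `Λ` is a horseshoe of `φ` with symbol space `B`. -/
def HorseshoeWitness (φ : Flow ℝ M) (Λ : Set M) (B : Type) [Fintype B] [MetricSpace B] : Prop :=
  2 ≤ Fintype.card B ∧ ∃ ρ : (ℤ → B) → ℝ, Continuous ρ ∧ (∀ x, 0 < ρ x) ∧
    IsSuspensionOn (fullShift B) Set.univ ρ φ Λ

/-- A horseshoe of a flow: a compact invariant set on which the flow is conjugate to
a suspension flow over a full shift on at least two symbols. -/
def IsHorseshoe (φ : Flow ℝ M) (Λ : Set M) : Prop :=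
  ∃ (B : Type) (iB : Fintype B) (mB : MetricSpace B), @HorseshoeWitness M _ φ Λ B iB mB

end Horseshoe

/-! ### The metric on measures and empirical measures -/

section MeasMetric

variable {M : Type*} [MetricSpace M] [MeasurableSpace M]

/-- The metric `𝔡` on Borel (probability) measures determined by a sequence of test
functions `Φ`. -/
noncomputable def measDist (Φ : ℕ → M → ℝ) (μ ν : Measure M) : ℝ :=
  ∑' n : ℕ, (1 / 2 : ℝ) ^ (n + 1) * |(∫ x, Φ n x ∂μ) - ∫ x, Φ n x ∂ν|

/-- A sequence of test functions with `‖Φ n‖_∞ + Lip (Φ n) ≤ 1`, dense in `C(M,ℝ)`. -/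
def GoodTestSeq (Φ : ℕ → M → ℝ) : Prop :=
  (∀ n : ℕ, ∃ C K : ℝ, 0 ≤ C ∧ 0 ≤ K ∧ C + K ≤ 1 ∧ (∀ x, |Φ n x| ≤ C) ∧
    ∀ x y, |Φ n x - Φ n y| ≤ K * dist x y) ∧
  ∀ g : M → ℝ, Continuous g → ∀ ε : ℝ, 0 < ε → ∃ n : ℕ, ∀ x, |g x - Φ n x| < ε

/-- The `n`-th empirical measure of the point `x` for the map `f`. -/
noncomputable def empMeasure (f : M → M) (n : ℕ) (x : M) : Measure M :=
  (n : ℝ≥0∞)⁻¹ • ∑ j ∈ Finset.range n, Measure.dirac (f^[j] x)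

/-- The topological support of a measure. -/
def measSupport (μ : Measure M) : Set M :=
  {x | ∀ U : Set M, IsOpen U → x ∈ U → 0 < μ U}

/-- A measure of maximal entropy of `f` on `Λ`. -/
def IsMaxEntropyMeasureOn (f : M → M) (Λ : Set M) (μ : Measure M) : Prop :=
  IsProbabilityMeasure μ ∧ MeasurePreserving f μ μ ∧ μ Λᶜ = 0 ∧
    measEntropy f μ = topEntropyOn f Λ

end MeasMetric

/-! ### Flow shadowing and expansiveness -/

section FlowShadow

variable {M : Type*} [MetricSpace M]

/-- Bowen–Walters expansiveness for flows. -/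
def FlowExpansive (φ : Flow ℝ M) : Prop :=
  ∀ ε : ℝ, 0 < ε → ∃ δ : ℝ, 0 < δ ∧ ∀ x y : M, ∀ s : ℝ → ℝ, Continuous s → s 0 = 0 →
    (∀ t : ℝ, dist (φ.toFun t x) (φ.toFun (s t) y) ≤ δ) →
    ∃ τ : ℝ, |τ| ≤ ε ∧ y = φ.toFun τ x

/-- The shadowing property for flows: every `(δ,1)`-pseudo-orbit is `ε`-traced,
up to an orientation preserving reparametrization of time, by a true orbit. -/
def FlowShadowing (φ : Flow ℝ M) : Prop :=
  ∀ ε : ℝ, 0 < ε → ∃ δ : ℝ, 0 < δ ∧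
    ∀ (x : ℤ → M) (T S : ℤ → ℝ), (∀ i : ℤ, 1 ≤ T i) →
      (∀ i : ℤ, dist (φ.toFun (T i) (x i)) (x (i + 1)) ≤ δ) →
      S 0 = 0 → (∀ i : ℤ, S (i + 1) = S i + T i) →
      ∃ (z : M) (h : ℝ → ℝ), StrictMono h ∧ Continuous h ∧ Function.Surjective h ∧
        ∀ i : ℤ, ∀ t : ℝ, S i ≤ t → t < S (i + 1) →
          dist (φ.toFun (h t) z) (φ.toFun (t - S i) (x i)) ≤ ε

end FlowShadow


/-! ### Lift of a measure to a suspension flow -/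

section Lift

variable {X : Type*} [MeasurableSpace X] {Y : Type*} [TopologicalSpace Y] [MeasurableSpace Y]

/-- The lift of a base measure `ν` to the suspension flow `φ` with roof `ρ`,
via the base embedding `e`: the normalized image of `ν ⊗ Leb` on the region
below the roof. -/
noncomputable def suspLift (φ : Flow ℝ Y) (e : X → Y) (ρ : X → ℝ) (ν : Measure X) :
    Measure Y :=
  (ENNReal.ofReal (∫ x, ρ x ∂ν))⁻¹ •
    Measure.map (fun p : X × ℝ => φ.toFun p.2 (e p.1))
      ((ν.prod (volume : Measure ℝ)).restrict {p : X × ℝ | 0 ≤ p.2 ∧ p.2 < ρ p.1})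

end Lift


end EF
open EF

set_option linter.unusedSectionVars false

namespace EF

/-! ### Words and cylinders -/

section Words

variable {A : Type*}

/-- The word of length `n` read in `x` from position `i` on. -/
def wd (x : ℤ → A) (i : ℤ) (n : ℕ) : List A :=
  (List.range n).map fun j => x (i + (j : ℕ))

@[simp] lemma wd_length (x : ℤ → A) (i : ℤ) (n : ℕ) : (wd x i n).length = n := by
  simp [wd]

lemma iterate_shift (n : ℕ) (x : ℤ → A) (i : ℤ) : (fullShift A)^[n] x i = x (i + n) := by
  induction n generalizing x i with
  | zero => simp
  | succ n ih =>
    rw [Function.iterate_succ_apply, ih]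
    simp only [fullShift]
    congr 1
    push_cast
    ring

lemma wd_iterate (x : ℤ → A) (i : ℤ) (n m : ℕ) :
    wd ((fullShift A)^[m] x) i n = wd x (i + m) n := by
  simp only [wd, iterate_shift]
  refine List.map_congr_left fun j _ => ?_
  congr 1
  ring

lemma wd_add (x : ℤ → A) (i : ℤ) (n m : ℕ) : wd x i (n + m) = wd x i n ++ wd x (i + n) m := by
  simp only [wd, List.range_add, List.map_append, List.map_map]
  congr 1
  refine List.map_congr_left fun j _ => ?_
  simp only [Function.comp]
  congr 1
  push_cast
  ring

lemma wd_eq_wd_iff (x y : ℤ → A) (i k : ℤ) (n : ℕ) :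
    wd x i n = wd y k n ↔ ∀ j : ℕ, j < n → x (i + j) = y (k + j) := by
  simp [wd]

lemma wd_congr {x y : ℤ → A} {i k : ℤ} {n : ℕ} (h : ∀ j : ℕ, j < n → x (i + j) = y (k + j)) :
    wd x i n = wd y k n := (wd_eq_wd_iff x y i k n).2 h

lemma wd_append_right {x : ℤ → A} {n m : ℕ} {w w' : List A} (hw : w.length = n)
    (h : wd x 0 (n + m) = w ++ w') : wd x 0 n = w ∧ wd ((fullShift A)^[n] x) 0 m = w' := by
  rw [wd_add] at h
  have := List.append_inj h (by simp [hw])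
  rw [wd_iterate]
  exact this

/-- Every word over a nonempty alphabet is read off some point. -/
lemma exists_wd_eq [Nonempty A] (w : List A) : ∃ x : ℤ → A, wd x 0 w.length = w := by
  classical
  refine ⟨fun i => (w[i.toNat]?).getD (Classical.arbitrary A), ?_⟩
  apply List.ext_getElem (by simp)
  intro j h1 h2
  simp [wd, h2]

end Words

section Top

variable {A : Type*} [Fintype A] [MetricSpace A]

lemma continuous_shift : Continuous (fullShift A) := by
  unfold fullShift
  fun_prop

lemma continuous_shift_iterate (n : ℕ) : Continuous (fullShift A)^[n] :=
  continuous_shift.iterate n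

lemma isClopen_wd (i : ℤ) (n : ℕ) (p : List A → Prop) : IsClopen {x : ℤ → A | p (wd x i n)} := by
  have hg : Continuous fun (x : ℤ → A) (j : Fin n) => x (i + (j : ℕ)) := by fun_prop
  have : {x : ℤ → A | p (wd x i n)} =
      (fun (x : ℤ → A) (j : Fin n) => x (i + (j : ℕ))) ⁻¹' {v | p (List.ofFn v)} := by
    ext x
    have : wd x i n = List.ofFn fun j : Fin n => x (i + (j : ℕ)) := by
      apply List.ext_getElem <;> simp [wd]
    simp [this]
  rw [this]
  exact (isClopen_discrete _).preimage hg

lemma continuous_wd_comp {Z : Type*} [TopologicalSpace Z] (i : ℤ) (n : ℕ) (g : List A → Z) :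
    Continuous fun x : ℤ → A => g (wd x i n) := by
  rw [continuous_def]
  intro U _
  exact (isClopen_wd i n (fun w => g w ∈ U)).isOpen

/-- Cylinders form a neighbourhood basis. -/
lemma exists_window_subset {U : Set (ℤ → A)} (hU : IsOpen U) {x : ℤ → A} (hx : x ∈ U) :
    ∃ r : ℕ, ∀ y : ℤ → A, (∀ i : ℤ, |i| ≤ r → y i = x i) → y ∈ U := by
  obtain ⟨I, u, h1, h2⟩ := isOpen_pi_iff.1 hU x hx
  refine ⟨I.sup Int.natAbs, fun y hy => h2 ?_⟩
  intro i hi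
  have h3 : Int.natAbs i ≤ I.sup Int.natAbs := Finset.le_sup (f := Int.natAbs) hi
  rw [hy i (by rw [Int.abs_eq_natAbs]; exact_mod_cast h3)]
  exact (h1 i hi).2

/-- A closed set of pairs avoiding the diagonal of a closed set is seen in a bounded window. -/
lemma exists_window {S : Set (ℤ → A)} (hS : IsClosed S) (D : Set (↥S × ↥S)) (hD : IsClosed D)
    (hdiag : ∀ x, (x, x) ∉ D) :
    ∃ r : ℕ, ∀ x y : ↥S, (∀ i : ℤ, |i| ≤ r → x.1 i = y.1 i) → (x, y) ∉ D := by
  by_contra hcon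
  push Not at hcon
  have : CompactSpace ↥S := isCompact_iff_compactSpace.1 hS.isCompact
  let K : ℕ → Set (↥S × ↥S) := fun r => D ∩ {p | ∀ i : ℤ, |i| ≤ r → p.1.1 i = p.2.1 i}
  have hK : ∀ r, IsClosed (K r) := by
    intro r
    refine hD.inter ?_
    simp only [Set.ofPred_forall]
    refine isClosed_iInter fun i => isClosed_iInter fun _ => isClosed_eq
      ((continuous_apply i).comp (continuous_subtype_val.comp continuous_fst))
      ((continuous_apply i).comp (continuous_subtype_val.comp continuous_snd))
  have hne := IsCompact.nonempty_iInter_of_sequence_nonempty_isCompact_isClosed K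
    (fun r p hp => ⟨hp.1, fun i hi => hp.2 i (hi.trans (by push_cast; linarith))⟩)
    (fun r => by
      obtain ⟨x, y, h1, h2⟩ := hcon r
      exact ⟨(x, y), h2, h1⟩) ((hK 0).isCompact) hK
  obtain ⟨p, hp⟩ := hne
  simp only [mem_iInter] at hp
  have : p.1 = p.2 := by
    apply Subtype.ext
    funext i
    exact (hp i.natAbs).2 i (by rw [Int.abs_eq_natAbs])
  have h0 := (hp 0).1
  obtain ⟨a, b⟩ := p
  simp only at this
  subst this
  exact hdiag _ h0

lemma exists_window_discrete {S : Set (ℤ → A)} (hS : IsClosed S) {Z : Type*} [TopologicalSpace Z]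
    [DiscreteTopology Z] (f : ↥S → Z) (hf : Continuous f) :
    ∃ r : ℕ, ∀ x y : ↥S, (∀ i : ℤ, |i| ≤ r → x.1 i = y.1 i) → f x = f y := by
  obtain ⟨r, hr⟩ := exists_window hS {p | f p.1 ≠ f p.2}
    (by
      have : Continuous fun p : ↥S × ↥S => (f p.1, f p.2) := by fun_prop
      exact (isClosed_discrete {q : Z × Z | q.1 ≠ q.2}).preimage this) (by simp)
  exact ⟨r, fun x y h => by simpa using hr x y h⟩

lemma exists_window_real {f : (ℤ → A) → ℝ} (hf : Continuous f) {ε : ℝ} (hε : 0 < ε) :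
    ∃ r : ℕ, ∀ x y : ℤ → A, (∀ i : ℤ, |i| ≤ r → x i = y i) → |f x - f y| < ε := by
  obtain ⟨r, hr⟩ := exists_window (isClosed_univ (X := ℤ → A))
    {p | ε ≤ |f p.1.1 - f p.2.1|}
    (isClosed_le continuous_const (by fun_prop)) (by simp [hε])
  exact ⟨r, fun x y h => by simpa using hr ⟨x, trivial⟩ ⟨y, trivial⟩ h⟩

lemma exists_bound {f : (ℤ → A) → ℝ} (hf : Continuous f) : ∃ B : ℝ, 0 < B ∧ ∀ x, |f x| ≤ B := by
  obtain ⟨B, hB⟩ := isCompact_univ.exists_bound_of_continuousOn (f := f) hf.continuousOn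
  refine ⟨max B 1, by positivity, fun x => (hB x trivial).trans (le_max_left _ _)⟩

lemma abs_birkhoff_le {f : (ℤ → A) → ℝ} {B : ℝ} (hB : ∀ x, |f x| ≤ B) (n : ℕ) (x : ℤ → A) :
    |birkhoffSum (fullShift A) f n x| ≤ n * B := by
  unfold birkhoffSum
  refine (Finset.abs_sum_le_sum_abs _ _).trans ?_
  refine (Finset.sum_le_card_nsmul _ _ B fun i _ => hB _).trans ?_
  simp

/-- Birkhoff sums of a continuous function along two points sharing a word of length `n`
differ by `o(n)`. -/
lemma birkhoff_osc {f : (ℤ → A) → ℝ} (hf : Continuous f) {ε : ℝ} (hε : 0 < ε) :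
    ∃ n₀ : ℕ, ∀ n ≥ n₀, ∀ x y : ℤ → A, wd x 0 n = wd y 0 n →
      |birkhoffSum (fullShift A) f n x - birkhoffSum (fullShift A) f n y| ≤ n * ε := by
  obtain ⟨r, hr⟩ := exists_window_real hf (half_pos hε)
  obtain ⟨B, hB0, hB⟩ := exists_bound hf
  obtain ⟨n₀, hn₀⟩ := exists_nat_gt (8 * r * B / ε)
  refine ⟨n₀ + 2 * r, fun n hn x y hxy => ?_⟩
  rw [wd_eq_wd_iff] at hxy
  have key : ∀ k ∈ Finset.range n, |f ((fullShift A)^[k] x) - f ((fullShift A)^[k] y)| ≤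
      ε / 2 + (if k < r ∨ n ≤ k + r then 2 * B else 0) := by
    intro k hk
    rw [Finset.mem_range] at hk
    split_ifs with h
    · have h1 := hB ((fullShift A)^[k] x)
      have h2 := hB ((fullShift A)^[k] y)
      rw [abs_le] at *
      constructor <;> linarith
    · push Not at h
      rw [add_zero]
      refine (hr _ _ fun i hi => ?_).le
      rw [iterate_shift, iterate_shift]
      rw [abs_le] at hi
      have := hxy (i + k).toNat (by omega)
      rw [Int.toNat_of_nonneg (by omega)] at this
      simpa using this
  have hcard : ((Finset.range n).filter fun k => k < r ∨ n ≤ k + r).card ≤ 2 * r := by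
    have : (Finset.range n).filter (fun k => k < r ∨ n ≤ k + r) ⊆
        Finset.range r ∪ Finset.Ico (n - r) n := by
      intro k hk
      simp only [Finset.mem_filter, Finset.mem_range, Finset.mem_union, Finset.mem_Ico] at hk ⊢
      omega
    refine (Finset.card_le_card this).trans ((Finset.card_union_le _ _).trans ?_)
    simp
    omega
  unfold birkhoffSum
  rw [← Finset.sum_sub_distrib]
  refine (Finset.abs_sum_le_sum_abs _ _).trans ((Finset.sum_le_sum key).trans ?_)
  rw [Finset.sum_add_distrib, ← Finset.sum_filter]
  simp only [Finset.sum_const, Finset.card_range, nsmul_eq_mul]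
  have h3 : (((Finset.range n).filter fun k => k < r ∨ n ≤ k + r).card : ℝ) ≤ 2 * r := by
    exact_mod_cast hcard
  have h4 : (n₀ : ℝ) ≤ n := by exact_mod_cast (by omega : n₀ ≤ n)
  rw [div_lt_iff₀ hε] at hn₀
  nlinarith

end Top

/-! ### Gluing in shifts of finite type -/

section Gluing

variable {A : Type*} [Fintype A] [MetricSpace A]

lemma translate_mem {S : Set (ℤ → A)} (hS : fullShift A '' S = S) (k : ℤ) {x : ℤ → A}
    (hx : x ∈ S) : (fun i => x (i + k)) ∈ S := by
  induction k with
  | zero => simpa using hx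
  | succ n ih =>
    have : (fun i => x (i + ((n : ℤ) + 1))) = fullShift A (fun i => x (i + n)) := by
      funext i
      simp only [fullShift]
      congr 1
      ring
    rw [this, ← hS]
    exact mem_image_of_mem _ ih
  | pred n ih =>
    rw [← hS] at ih
    obtain ⟨y, hy, hyx⟩ := ih
    have : (fun i => x (i + (-(n : ℤ) - 1))) = y := by
      funext i
      have := congrFun hyx (i - 1)
      simp only [fullShift, sub_add_cancel] at this
      rw [this]
      congr 1
      ring
    rwa [this]

lemma shift_mem {S : Set (ℤ → A)} (hS : fullShift A '' S = S) {x : ℤ → A}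
    (hx : x ∈ S) : fullShift A x ∈ S := by
  rw [← hS]
  exact mem_image_of_mem _ hx

lemma iterate_mem {S : Set (ℤ → A)} (hS : fullShift A '' S = S) (k : ℕ) {x : ℤ → A}
    (hx : x ∈ S) : (fullShift A)^[k] x ∈ S := by
  have : (fullShift A)^[k] x = fun i => x (i + (k : ℤ)) := by
    funext i
    rw [iterate_shift]
  rw [this]
  exact translate_mem hS k hx

/-- A conjugacy given by a homeomorphism of the two subshifts intertwines all translates. -/
lemma conj_translate {B : Type*} [MetricSpace B] {S : Set (ℤ → A)}
    {T : Set (ℤ → B)} (hS : fullShift A '' S = S) (h : ↥S → ↥T)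
    (hh : ∀ x y : ↥S, (y : ℤ → A) = fullShift A (x : ℤ → A) →
      ((h y : ℤ → B)) = fullShift B ((h x : ℤ → B))) (k : ℤ) (x : ↥S) :
    (h ⟨_, translate_mem hS k x.2⟩ : ℤ → B) = fun i => (h x : ℤ → B) (i + k) := by
  induction k with
  | zero =>
    have : (⟨_, translate_mem hS 0 x.2⟩ : ↥S) = x := Subtype.ext (by simp)
    rw [this]
    simp
  | succ n ih =>
    rw [hh ⟨_, translate_mem hS n x.2⟩ _ (by
      funext i
      simp only [fullShift]
      ring_nf), ih]
    funext i
    simp only [fullShift]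
    ring_nf
  | pred n ih =>
    have h1 := hh ⟨_, translate_mem hS (-(n : ℤ) - 1) x.2⟩ ⟨_, translate_mem hS (-(n : ℤ)) x.2⟩ (by
      funext i
      simp only [fullShift]
      ring_nf)
    rw [ih] at h1
    funext i
    have := congrFun h1 (i - 1)
    simp only [fullShift, sub_add_cancel] at this
    rw [← this]
    ring_nf

/-- A shift of finite type is determined by words of bounded length: two points that agree
near the origin can be spliced there. -/
lemma sft_splice {S : Set (ℤ → A)} (hS : IsSFT S) :
    ∃ M : ℕ, ∀ x ∈ S, ∀ y ∈ S, (∀ i : ℤ, |i| ≤ M → x i = y i) →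
      (fun i : ℤ => if i ≤ 0 then x i else y i) ∈ S := by
  obtain ⟨⟨hcl, hinv⟩, B, _, mB, Adj, hconj⟩ := hS
  unfold ShiftConj at hconj
  generalize hT : vertexShift Adj = T at hconj
  obtain ⟨h, hh⟩ := hconj
  have hTm : ∀ z, z ∈ T ↔ ∀ i : ℤ, Adj (z i) (z (i + 1)) := fun z => by rw [← hT]; rfl
  have hTcl : IsClosed T := by
    rw [← hT]
    simp only [vertexShift, Set.ofPred_forall]
    refine isClosed_iInter fun i => ?_
    have : Continuous fun z : ℤ → B => (z i, z (i + 1)) := by fun_prop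
    exact (isClosed_discrete {q : B × B | Adj q.1 q.2}).preimage this
  have hTinv : fullShift B '' T = T := by
    apply Subset.antisymm
    · rintro _ ⟨z, hz, rfl⟩
      rw [hTm] at hz ⊢
      exact fun i => hz (i + 1)
    · intro z hz
      rw [hTm] at hz
      refine ⟨fun i => z (i - 1), (hTm _).2 fun i => ?_, ?_⟩
      · have := hz (i - 1)
        simpa [add_sub_cancel_right, sub_add_cancel] using this
      · funext i
        simp [fullShift]
  have hhs : ∀ x y : ↥T, (y : ℤ → B) = fullShift B (x : ℤ → B) →
      ((h.symm y : ℤ → A)) = fullShift A ((h.symm x : ℤ → A)) := by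
    intro x y hxy
    have h1 := hh (h.symm x) ⟨_, shift_mem hinv (h.symm x).2⟩ rfl
    rw [h.apply_symm_apply] at h1
    have h2 : h ⟨_, shift_mem hinv (h.symm x).2⟩ = y := Subtype.ext (h1.trans hxy.symm)
    rw [← h2, h.symm_apply_apply]
  obtain ⟨R₁, hR₁⟩ := exists_window_discrete hcl (fun x => (h x : ℤ → B) 0)
    ((continuous_apply 0).comp (continuous_subtype_val.comp h.continuous))
  obtain ⟨R₂, hR₂⟩ := exists_window_discrete hTcl (fun x => (h.symm x : ℤ → A) 0)
    ((continuous_apply 0).comp (continuous_subtype_val.comp h.symm.continuous))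
  refine ⟨R₁ + R₂, fun x hx y hy hxy => ?_⟩
  set u := h ⟨x, hx⟩ with hu
  set v := h ⟨y, hy⟩ with hv
  have huv : ∀ i : ℤ, |i| ≤ R₂ → (u : ℤ → B) i = (v : ℤ → B) i := by
    intro i hi
    have h1 := congrFun (conj_translate hinv h hh i ⟨x, hx⟩) 0
    have h2 := congrFun (conj_translate hinv h hh i ⟨y, hy⟩) 0
    simp only [zero_add] at h1 h2
    rw [hu, hv, ← h1, ← h2]
    refine hR₁ _ _ fun j hj => hxy _ ?_
    push_cast
    exact (abs_add_le j i).trans (add_le_add hj hi)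
  have hw : (fun i : ℤ => if i ≤ 0 then (u : ℤ → B) i else (v : ℤ → B) i) ∈ T := by
    rw [hTm]
    intro i
    have hu2 := (hTm _).1 u.2
    have hv2 := (hTm _).1 v.2
    rcases lt_trichotomy i 0 with h0 | h0 | h0
    · simpa [h0.le, (by omega : i + 1 ≤ 0)] using hu2 i
    · subst h0
      have := hv2 0
      rw [← huv 0 (by simp)] at this
      simpa using this
    · simp only [if_neg (not_le.2 h0), if_neg (by omega : ¬ (i + 1 ≤ 0))]
      exact hv2 i
  set w : ↥T := ⟨_, hw⟩ with hwdef
  have hz : ∀ i : ℤ, (h.symm w : ℤ → A) i = if i ≤ 0 then x i else y i := by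
    intro i
    have h1 := congrFun (conj_translate hTinv h.symm hhs i w) 0
    have h2 := congrFun (conj_translate hTinv h.symm hhs i u) 0
    have h3 := congrFun (conj_translate hTinv h.symm hhs i v) 0
    simp only [zero_add] at h1 h2 h3
    rw [hu, h.symm_apply_apply] at h2
    rw [hv, h.symm_apply_apply] at h3
    rw [← h1]
    split_ifs with hi
    · simp only at h2
      rw [← h2]
      refine hR₂ _ _ fun j hj => ?_
      simp only [hwdef]
      split_ifs with hji
      · rfl
      · refine (huv _ ?_).symm
        rw [abs_le] at *
        omega
    · simp only at h3
      rw [← h3]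
      refine hR₂ _ _ fun j hj => ?_
      simp only [hwdef]
      split_ifs with hji
      · refine huv _ ?_
        rw [abs_le] at *
        omega
      · rfl
  have := (h.symm w).2
  rwa [show (h.symm w : ℤ → A) = _ from funext hz] at this

/-- `S` admits gluing along overlaps of length `L`. -/
def Glues (S : Set (ℤ → A)) (L : ℕ) : Prop :=
  ∀ x ∈ S, ∀ y ∈ S, ∀ n : ℕ, wd x n L = wd y 0 L →
    ∃ z ∈ S, wd z 0 (n + L) = wd x 0 (n + L) ∧ ∀ i : ℤ, n ≤ i → z i = y (i - n)

lemma sft_glues {S : Set (ℤ → A)} (hS : IsSFT S) : ∃ L, Glues S L := by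
  have hinv := hS.1.2
  obtain ⟨M, hM⟩ := sft_splice hS
  refine ⟨2 * M + 1, fun x hx y hy n hxy => ?_⟩
  rw [wd_eq_wd_iff] at hxy
  have h1 := hM _ (translate_mem hinv (n + M) hx) _ (translate_mem hinv M hy) (by
    intro i hi
    rw [abs_le] at hi
    have := hxy (i + M).toNat (by omega)
    rw [Int.toNat_of_nonneg (by omega)] at this
    simp only [zero_add] at this
    rw [← this]
    congr 1
    ring)
  have h2 := translate_mem hinv (-(n + M : ℤ)) h1
  refine ⟨_, h2, wd_congr fun j hj => ?_, fun i hi => ?_⟩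
  · simp only [zero_add]
    split_ifs with h3
    · congr 1
      ring
    · have := hxy (j - n) (by omega)
      rw [Nat.cast_sub (by omega)] at this
      simp only [zero_add, add_sub_cancel] at this
      rw [this]
      congr 1
      ring
  · split_ifs with h3
    · have := hxy (i - n).toNat (by omega)
      rw [Int.toNat_of_nonneg (by omega)] at this
      simp only [zero_add, add_sub_cancel] at this
      rw [← this]
      congr 1
      ring
    · congr 1
      ring

end Gluing

/-! ### Maximal Birkhoff sums over cylinders -/

section SupSum

variable {A : Type*} [Fintype A] [MetricSpace A]

/-- The supremum of the Birkhoff sums of `ρ` of length `|w|` over the points of `S` that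
start with `w`. It is meaningful for the words `w` occurring in `S`. -/
noncomputable def supSum (S : Set (ℤ → A)) (ρ : (ℤ → A) → ℝ) (w : List A) : ℝ :=
  sSup (birkhoffSum (fullShift A) ρ w.length '' {x | x ∈ S ∧ wd x 0 w.length = w})

lemma le_supSum {S : Set (ℤ → A)} {ρ : (ℤ → A) → ℝ} (hρ : Continuous ρ) {x : ℤ → A} (hx : x ∈ S)
    {w : List A} {n : ℕ} (h : wd x 0 n = w) :
    birkhoffSum (fullShift A) ρ n x ≤ supSum S ρ w := by
  obtain ⟨B, -, hB⟩ := exists_bound hρ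
  have hn : w.length = n := by rw [← h, wd_length]
  subst hn
  refine le_csSup ⟨w.length * B, ?_⟩ ⟨x, ⟨hx, h⟩, rfl⟩
  rintro _ ⟨y, -, rfl⟩
  exact (le_abs_self _).trans (abs_birkhoff_le hB _ _)

lemma supSum_le {S : Set (ℤ → A)} {ρ : (ℤ → A) → ℝ} {w : List A} {n : ℕ} (hn : w.length = n)
    (hne : ∃ x ∈ S, wd x 0 n = w) {C : ℝ}
    (h : ∀ x ∈ S, wd x 0 n = w → birkhoffSum (fullShift A) ρ n x ≤ C) : supSum S ρ w ≤ C := by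
  subst hn
  obtain ⟨x, hx, hxw⟩ := hne
  refine csSup_le ⟨_, ⟨x, ⟨hx, hxw⟩, rfl⟩⟩ ?_
  rintro _ ⟨y, ⟨hy, hyw⟩, rfl⟩
  exact h y hy hyw

lemma supSum_append_le {S : Set (ℤ → A)} (hS : fullShift A '' S = S) {ρ : (ℤ → A) → ℝ}
    (hρ : Continuous ρ) {w w' : List A} (hne : ∃ x ∈ S, wd x 0 (w ++ w').length = w ++ w') :
    supSum S ρ (w ++ w') ≤ supSum S ρ w + supSum S ρ w' := by
  refine supSum_le rfl hne fun x hx hxw => ?_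
  rw [List.length_append] at hxw ⊢
  have h := wd_append_right rfl hxw
  rw [birkhoffSum_add]
  exact add_le_add (le_supSum hρ hx h.1) (le_supSum hρ (iterate_mem hS _ hx) h.2)

lemma supSum_flatten_le {S : Set (ℤ → A)} (hS : fullShift A '' S = S) {ρ : (ℤ → A) → ℝ}
    (hρ : Continuous ρ) (l : List (List A)) :
    (∃ x ∈ S, wd x 0 l.flatten.length = l.flatten) →
    supSum S ρ l.flatten ≤ (l.map (supSum S ρ)).sum := by
  induction l with
  | nil =>
    intro h
    exact supSum_le rfl h fun x _ _ => by simp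
  | cons w l ih =>
    intro h
    rw [List.flatten_cons] at h ⊢
    rw [List.map_cons, List.sum_cons]
    refine (supSum_append_le hS hρ h).trans (add_le_add le_rfl (ih ?_))
    obtain ⟨x, hx, hxw⟩ := h
    rw [List.length_append] at hxw
    exact ⟨_, iterate_mem hS _ hx, (wd_append_right rfl hxw).2⟩

lemma supSum_nonneg {S : Set (ℤ → A)} (hS : fullShift A '' S = S) {ρ : (ℤ → A) → ℝ}
    (hρ : Continuous ρ) (hpos : ∀ x ∈ S, 0 < ρ x) {w : List A}
    (hne : ∃ x ∈ S, wd x 0 w.length = w) : 0 ≤ supSum S ρ w := by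
  obtain ⟨x, hx, hxw⟩ := hne
  refine le_trans ?_ (le_supSum hρ hx hxw)
  exact Finset.sum_nonneg fun i _ => (hpos _ (iterate_mem hS i hx)).le

lemma supSum_le_length {S : Set (ℤ → A)} {ρ : (ℤ → A) → ℝ} {B : ℝ} (hB : ∀ x, |ρ x| ≤ B)
    {w : List A} (hne : ∃ x ∈ S, wd x 0 w.length = w) : supSum S ρ w ≤ w.length * B :=
  supSum_le rfl hne fun _ _ _ => (le_abs_self _).trans (abs_birkhoff_le hB _ _)

end SupSum

/-! ### Loops and the inductive step -/

section Loops

variable {A : Type*} [Fintype A] [MetricSpace A]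

/-- `w` is a loop at `u`: some point of `S` reads `w u` from the origin, and this word also starts
with `u`. Loops at the same `u` can be concatenated freely when `S` glues along `u`. -/
def IsLoop (S : Set (ℤ → A)) (u w : List A) : Prop :=
  ∃ x ∈ S, wd x 0 w.length = w ∧ wd x 0 u.length = u ∧ wd x w.length u.length = u

lemma IsLoop.append {S : Set (ℤ → A)} {u w w' : List A} (hG : Glues S u.length)
    (h : IsLoop S u w) (h' : IsLoop S u w') : IsLoop S u (w ++ w') := by
  obtain ⟨x, hx, h1, h2, h3⟩ := h
  obtain ⟨y, hy, k1, k2, k3⟩ := h'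
  obtain ⟨z, hz, e1, e2⟩ := hG x hx y hy w.length (h3.trans k2.symm)
  have e3 : ∀ j : ℕ, j < w.length + u.length → z j = x j := by
    simpa [wd_eq_wd_iff] using e1
  refine ⟨z, hz, ?_, ?_, ?_⟩
  · rw [List.length_append, wd_add]
    congr 1
    · rw [← h1]
      simp only [wd_length]
      exact wd_congr fun j hj => by simpa using e3 j (by omega)
    · conv_rhs => rw [← k1]
      refine wd_congr fun j hj => ?_
      rw [e2 _ (by omega)]
      congr 1
      ring
  · conv_rhs => rw [← h2]
    exact wd_congr fun j hj => by simpa using e3 j (by omega)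
  · conv_rhs => rw [← k3]
    refine wd_congr fun j hj => ?_
    rw [List.length_append, e2 _ (by push_cast; omega)]
    congr 1
    push_cast
    ring

lemma IsLoop.flatten {S : Set (ℤ → A)} {u : List A} (hG : Glues S u.length) (l : List (List A))
    (hne : l ≠ []) (h : ∀ w ∈ l, IsLoop S u w) : IsLoop S u l.flatten := by
  induction l with
  | nil => exact absurd rfl hne
  | cons w l ih =>
    rcases eq_or_ne l [] with rfl | hl
    · simpa using h w (by simp)
    · rw [List.flatten_cons]
      exact (h w (by simp)).append hG (ih hl fun w' hw' => h w' (by simp [hw']))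

lemma IsLoop.occurs {S : Set (ℤ → A)} {u w : List A} (h : IsLoop S u w) :
    ∃ x ∈ S, wd x 0 w.length = w := by
  obtain ⟨x, hx, h1, -⟩ := h
  exact ⟨x, hx, h1⟩

/-- A family `W` of loops at `u` of common length `n` whose logarithmic size exceeds `c` times
every Birkhoff sum of `ρ` along its members. -/
structure Stage (S : Set (ℤ → A)) (ρ : (ℤ → A) → ℝ) (c : ℝ) (u : List A)
    (W : Finset (List A)) (n : ℕ) : Prop where
  pos : 0 < n
  nonempty : W.Nonempty
  len : ∀ w ∈ W, w.length = n
  loop : ∀ w ∈ W, IsLoop S u w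
  big : ∀ w ∈ W, c * supSum S ρ w + 2 ≤ Real.log W.card

/-- The next family: its words are concatenations of all words of `W`, each used once. -/
structure Next (S : Set (ℤ → A)) (ρ : (ℤ → A) → ℝ) (c : ℝ)
    (W W' : Finset (List A)) : Prop where
  perm : ∀ w ∈ W', ∃ l : List (List A), l.Perm W.toList ∧ w = l.flatten
  lower : c * ∑ w ∈ W, supSum S ρ w + 2 ≤ Real.log W'.card
  upper : Real.log W'.card ≤ c * ∑ w ∈ W, supSum S ρ w + 3

lemma flatten_inj_of_length {n : ℕ} (hn : 0 < n) (l l' : List (List A))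
    (h : ∀ w ∈ l, w.length = n) (h' : ∀ w ∈ l', w.length = n) (he : l.flatten = l'.flatten) :
    l = l' := by
  induction l generalizing l' with
  | nil =>
    cases l' with
    | nil => rfl
    | cons w l' =>
      have h1 := h' w (by simp)
      have h2 : (w :: l').flatten.length = 0 := by rw [← he]; rfl
      rw [List.flatten_cons, List.length_append] at h2
      omega
  | cons w l ih =>
    cases l' with
    | nil =>
      have h1 := h w (by simp)
      have h2 : (w :: l).flatten.length = 0 := by rw [he]; rfl
      rw [List.flatten_cons, List.length_append] at h2
      omega
    | cons w' l' =>
      rw [List.flatten_cons, List.flatten_cons] at he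
      obtain ⟨e1, e2⟩ := List.append_inj he
        ((h w (by simp)).trans (h' w' (by simp)).symm)
      rw [e1, ih l' (fun v hv => h v (by simp [hv])) (fun v hv => h' v (by simp [hv])) e2]

lemma log_factorial_ge (m : ℕ) : m * Real.log m - m ≤ Real.log (m.factorial) := by
  rcases Nat.eq_zero_or_pos m with rfl | hm
  · simp
  have hm' : (0 : ℝ) < m := by exact_mod_cast hm
  have h := Real.pow_div_factorial_le_exp (m : ℝ) hm'.le m
  have hf : (0 : ℝ) < m.factorial := by exact_mod_cast Nat.factorial_pos m
  have h2 := Real.log_le_log (by positivity) h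
  rw [Real.log_exp, Real.log_div (by positivity) hf.ne', Real.log_pow] at h2
  linarith

lemma exists_next {S : Set (ℤ → A)} (hS : fullShift A '' S = S) {ρ : (ℤ → A) → ℝ}
    (hρ : Continuous ρ) (hpos : ∀ x ∈ S, 0 < ρ x) {c : ℝ} (hc : 0 < c) {u : List A}
    (hG : Glues S u.length) {W : Finset (List A)} {n : ℕ} (h : Stage S ρ c u W n) :
    ∃ W', Stage S ρ c u W' (W.card * n) ∧ Next S ρ c W W' := by
  classical
  have hnn : ∀ w ∈ W, 0 ≤ supSum S ρ w := fun w hw => supSum_nonneg hS hρ hpos (h.loop w hw).occurs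
  have hcard : 0 < W.card := h.nonempty.card_pos
  have hlog2 : 2 ≤ Real.log W.card := by
    obtain ⟨w, hw⟩ := h.nonempty
    have := h.big w hw
    have := mul_nonneg hc.le (hnn w hw)
    linarith
  have hcard3 : (3 : ℝ) ≤ W.card := by
    have h1 : Real.exp 2 ≤ W.card := by
      rw [← Real.le_log_iff_exp_le (by exact_mod_cast hcard)]
      exact hlog2
    have h2 := Real.add_one_le_exp 2
    linarith
  set T := ∑ w ∈ W, supSum S ρ w with hT
  have hT0 : 0 ≤ T := Finset.sum_nonneg hnn
  set s : ℕ := ⌈Real.exp (c * T + 2)⌉₊ with hs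
  have hs1 : Real.exp (c * T + 2) ≤ s := Nat.le_ceil _
  have hs0 : (0 : ℝ) < s := (Real.exp_pos _).trans_le hs1
  have hs2 : (s : ℝ) ≤ Real.exp (c * T + 3) := by
    have h1 := (Nat.ceil_lt_add_one (Real.exp_pos (c * T + 2)).le).le
    have h2 : 1 ≤ Real.exp (c * T + 2) := Real.one_le_exp (by positivity)
    have h3 : Real.exp (c * T + 3) = Real.exp (c * T + 2) * Real.exp 1 := by
      rw [← Real.exp_add]
      ring_nf
    have h4 := Real.add_one_le_exp 1
    rw [h3]
    nlinarith
  -- the permutations of `W` are numerous enough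
  have hfac : s ≤ W.card.factorial := by
    have h1 : c * T + 3 ≤ Real.log (W.card.factorial) := by
      refine le_trans ?_ (log_factorial_ge _)
      have : ∑ w ∈ W, (c * supSum S ρ w + 2) ≤ ∑ w ∈ W, Real.log W.card :=
        Finset.sum_le_sum h.big
      rw [Finset.sum_add_distrib, ← Finset.mul_sum, ← hT] at this
      simp only [Finset.sum_const, nsmul_eq_mul] at this
      linarith
    have h2 : (s : ℝ) ≤ (W.card.factorial : ℝ) := by
      refine hs2.trans ?_
      rwa [← Real.le_log_iff_exp_le (by exact_mod_cast Nat.factorial_pos _)]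
    exact_mod_cast h2
  have hmem : ∀ l ∈ W.toList.permutations, ∀ w ∈ l, w ∈ W := by
    intro l hl w hw
    rw [List.mem_permutations] at hl
    simpa using hl.mem_iff.1 hw
  set F : Finset (List A) := W.toList.permutations.toFinset.image List.flatten with hF
  have hFcard : F.card = W.card.factorial := by
    rw [hF, Finset.card_image_of_injOn, List.toFinset_card_of_nodup, List.length_permutations,
      Finset.length_toList]
    · exact (List.nodup_permutations _ W.nodup_toList)
    · intro l hl l' hl' he
      simp only [List.coe_toFinset, mem_ofPred_eq] at hl hl'
      exact flatten_inj_of_length h.pos l l' (fun w hw => h.len w (hmem l hl w hw))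
        (fun w hw => h.len w (hmem l' hl' w hw)) he
  obtain ⟨W', hW'F, hW's⟩ := Finset.exists_subset_card_eq (hFcard.symm ▸ hfac)
  have hperm : ∀ w ∈ W', ∃ l : List (List A), l.Perm W.toList ∧ w = l.flatten := by
    intro w hw
    have := hW'F hw
    simp only [hF, Finset.mem_image, List.mem_toFinset, List.mem_permutations] at this
    obtain ⟨l, hl, rfl⟩ := this
    exact ⟨l, hl, rfl⟩
  have hlow : c * T + 2 ≤ Real.log W'.card := by
    rw [hW's, Real.le_log_iff_exp_le hs0]
    exact hs1
  have hloop : ∀ w ∈ W', IsLoop S u w := by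
    intro w hw
    obtain ⟨l, hl, rfl⟩ := hperm w hw
    refine IsLoop.flatten hG l ?_ fun w hw => h.loop w (by simpa using hl.mem_iff.1 hw)
    rintro rfl
    have := hl.length_eq
    simp at this
    omega
  refine ⟨W', ⟨Nat.mul_pos hcard h.pos, ?_, ?_, hloop, ?_⟩, hperm, hlow, ?_⟩
  · rw [← Finset.card_pos, hW's]
    exact_mod_cast hs0
  · intro w hw
    obtain ⟨l, hl, rfl⟩ := hperm w hw
    rw [List.length_flatten, List.map_congr_left (g := fun _ => n)
      (fun w hw => h.len w (by simpa using hl.mem_iff.1 hw))]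
    simp [hl.length_eq]
  · intro w hw
    refine le_trans ?_ hlow
    have hocc := (hloop w hw).occurs
    obtain ⟨l, hl, rfl⟩ := hperm w hw
    have h1 := supSum_flatten_le hS hρ l hocc
    rw [(hl.map (supSum S ρ)).sum_eq, Finset.sum_map_toList] at h1
    have := mul_le_mul_of_nonneg_left h1 hc.le
    linarith
  · rw [hW's, Real.log_le_iff_le_exp hs0]
    exact hs2

/-- A starting family produces an infinite sequence of families. -/
lemma exists_tower {S : Set (ℤ → A)} (hS : fullShift A '' S = S) {ρ : (ℤ → A) → ℝ}
    (hρ : Continuous ρ) (hpos : ∀ x ∈ S, 0 < ρ x) {c : ℝ} (hc : 0 < c) {u : List A}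
    (hG : Glues S u.length) {W₀ : Finset (List A)} {n₀ : ℕ} (h : Stage S ρ c u W₀ n₀) :
    ∃ (W : ℕ → Finset (List A)) (n : ℕ → ℕ), (∀ k, Stage S ρ c u (W k) (n k)) ∧
      (∀ k, Next S ρ c (W k) (W (k + 1))) ∧ (∀ k, n (k + 1) = (W k).card * n k) := by
  have step : ∀ p : {p : Finset (List A) × ℕ // Stage S ρ c u p.1 p.2},
      ∃ q : {p : Finset (List A) × ℕ // Stage S ρ c u p.1 p.2},
        Next S ρ c p.1.1 q.1.1 ∧ q.1.2 = p.1.1.card * p.1.2 := by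
    rintro ⟨⟨W, n⟩, hp⟩
    obtain ⟨W', h1, h2⟩ := exists_next hS hρ hpos hc hG hp
    exact ⟨⟨⟨W', _⟩, h1⟩, h2, rfl⟩
  choose f hf using step
  let t : ℕ → {p : Finset (List A) × ℕ // Stage S ρ c u p.1 p.2} :=
    fun k => f^[k] ⟨⟨W₀, n₀⟩, h⟩
  have ht : ∀ k, t (k + 1) = f (t k) := fun k => Function.iterate_succ_apply' f k _
  refine ⟨fun k => (t k).1.1, fun k => (t k).1.2, fun k => (t k).2, fun k => ?_, fun k => ?_⟩
  · simp only [ht]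
    exact (hf _).1
  · simp only [ht]
    exact (hf _).2

end Loops

/-! ### An upper bound for the entropy of a partition -/

section Coding

variable {A : Type*} [Fintype A] [MetricSpace A] [MeasurableSpace (ℤ → A)] [BorelSpace (ℤ → A)]

lemma measurableSet_wd (i : ℤ) (n : ℕ) (p : List A → Prop) :
    MeasurableSet {x : ℤ → A | p (wd x i n)} := (isClopen_wd i n p).isOpen.measurableSet

lemma measurable_shift : Measurable (fullShift A) := continuous_shift.measurable

/-- Gibbs' inequality. -/
lemma gibbs {ι : Type*} [Fintype ι] (p q : ι → ℝ) (hp : ∀ i, 0 ≤ p i) (hp1 : ∑ i, p i = 1)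
    (hq : ∀ i, 0 < q i) (hq1 : ∑ i, q i ≤ 1) :
    ∑ i, negMulLog (p i) ≤ ∑ i, p i * (-Real.log (q i)) := by
  have key : ∀ i, negMulLog (p i) ≤ p i * (-Real.log (q i)) + (q i - p i) := by
    intro i
    unfold negMulLog
    rcases (hp i).eq_or_lt with h | h
    · rw [← h]
      simp [(hq i).le]
    · have h1 := Real.log_le_sub_one_of_pos (div_pos (hq i) h)
      rw [Real.log_div (hq i).ne' h.ne'] at h1
      have h2 := mul_le_mul_of_nonneg_left h1 h.le
      have h3 : p i * (q i / p i - 1) = q i - p i := by field_simp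
      rw [h3] at h2
      linarith
  have := Finset.sum_le_sum fun i (_ : i ∈ Finset.univ) => key i
  rw [Finset.sum_add_distrib, Finset.sum_sub_distrib] at this
  linarith

lemma integrable_fintype_comp {X : Type*} [MeasurableSpace X] {ι : Type*} [Fintype ι]
    (μ : Measure X) [IsFiniteMeasure μ] (a : X → ι)
    (ha : ∀ i, MeasurableSet (a ⁻¹' {i})) (h : ι → ℝ) :
    Integrable (fun x => h (a x)) μ ∧ ∫ x, h (a x) ∂μ = ∑ i, μ.real (a ⁻¹' {i}) * h i := by
  classical
  have e : (fun x => h (a x)) = fun x => ∑ i, (a ⁻¹' {i}).indicator (fun _ => h i) x := by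
    funext x
    rw [Finset.sum_eq_single (a x)]
    · simp
    · intro i _ hi
      rw [indicator_of_notMem]
      simpa using hi.symm
    · simp
  have hi : ∀ i ∈ Finset.univ, Integrable ((a ⁻¹' {i}).indicator (fun _ => h i)) μ := fun i _ =>
    (integrable_const (h i)).indicator (ha i)
  refine ⟨?_, ?_⟩
  · rw [e]
    exact integrable_finsetSum _ hi
  · rw [e, integral_finsetSum _ hi]
    refine Finset.sum_congr rfl fun i _ => ?_
    rw [integral_indicator_const _ (ha i), smul_eq_mul]

/-- The atom of a finite measurable partition is, up to an error of small measure, a function of a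
long enough word. -/
lemma exists_approx (μ : Measure (ℤ → A)) [IsProbabilityMeasure μ]
    (hμ : MeasurePreserving (fullShift A) μ μ) {P : Finset (Set (ℤ → A))} (hP : IsMeasPartition P)
    (a : (ℤ → A) → {p // p ∈ P}) (ha : ∀ x, x ∈ (a x).1) {δ : ℝ} (hδ : 0 < δ) :
    ∃ (r : ℕ) (g : List A → {p // p ∈ P}),
      μ.real {x | a ((fullShift A)^[r] x) ≠ g (wd x 0 (2 * r + 1))} ≤ δ := by
  classical
  obtain ⟨hm, -, hdis⟩ := hP
  have hPne : Nonempty {p // p ∈ P} := by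
    obtain ⟨x⟩ := Measure.nonempty_of_neZero μ
    exact ⟨a x⟩
  have hcard : 0 < Fintype.card {p // p ∈ P} := Fintype.card_pos
  set η : ℝ≥0∞ := ENNReal.ofReal (δ / Fintype.card {p // p ∈ P}) with hη
  have hη0 : η ≠ 0 := by
    rw [hη]
    simp only [ne_eq, ENNReal.ofReal_eq_zero, not_le]
    positivity
  have hK : ∀ p : {p // p ∈ P}, ∃ K ⊆ p.1, IsClosed K ∧ μ (p.1 \ K) < η := fun p =>
    (hm p.1 p.2).exists_isClosed_sdiff_lt (measure_ne_top _ _) hη0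
  choose K hKs hKc hKm using hK
  have huniq : ∀ (x : ℤ → A) (p : {p // p ∈ P}), x ∈ p.1 → a x = p := by
    intro x p hx
    by_contra hne
    have : Disjoint (a x).1 p.1 := hdis (a x).2 p.2 (fun h => hne (Subtype.ext h))
    exact Set.disjoint_left.1 this (ha x) hx
  obtain ⟨r, hr⟩ := exists_window (isClosed_univ (X := ℤ → A))
    (⋃ (p : {p // p ∈ P}) (q : {p // p ∈ P}) (_ : p ≠ q), {z | z.1.1 ∈ K p ∧ z.2.1 ∈ K q})
    (by
      refine isClosed_iUnion_of_finite fun p => isClosed_iUnion_of_finite fun q =>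
        isClosed_iUnion_of_finite fun _ => ?_
      exact ((hKc p).preimage (continuous_subtype_val.comp continuous_fst)).inter
        ((hKc q).preimage (continuous_subtype_val.comp continuous_snd)))
    (by
      intro x hx
      simp only [mem_iUnion] at hx
      obtain ⟨p, q, hpq, h1, h2⟩ := hx
      exact hpq ((huniq _ p (hKs p h1)).symm.trans (huniq _ q (hKs q h2))))
  let g : List A → {p // p ∈ P} := fun w =>
    if h : ∃ p, ∃ x ∈ K p, wd x (-(r : ℤ)) (2 * r + 1) = w then h.choose
    else Classical.arbitrary _
  have hg : ∀ p, ∀ x ∈ K p, g (wd x (-(r : ℤ)) (2 * r + 1)) = p := by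
    intro p x hx
    have h : ∃ q, ∃ y ∈ K q, wd y (-(r : ℤ)) (2 * r + 1) = wd x (-(r : ℤ)) (2 * r + 1) :=
      ⟨p, x, hx, rfl⟩
    have e : g (wd x (-(r : ℤ)) (2 * r + 1)) = h.choose := dif_pos h
    obtain ⟨y, hy, hyx⟩ := h.choose_spec
    rw [e]
    by_contra hne
    rw [wd_eq_wd_iff] at hyx
    refine hr ⟨y, trivial⟩ ⟨x, trivial⟩ (fun i hi => ?_)
      (mem_iUnion.2 ⟨_, mem_iUnion.2 ⟨_, mem_iUnion.2 ⟨hne, hy, hx⟩⟩⟩)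
    rw [abs_le] at hi
    have := hyx (i + r).toNat (by omega)
    rw [Int.toNat_of_nonneg (by omega)] at this
    simpa using this
  refine ⟨r, g, ?_⟩
  have hsub : {x | a ((fullShift A)^[r] x) ≠ g (wd x 0 (2 * r + 1))} ⊆
      (fullShift A)^[r] ⁻¹' (⋃ p : {p // p ∈ P}, p.1 \ K p) := by
    intro x hx
    refine mem_iUnion.2 ⟨a ((fullShift A)^[r] x), ha _, fun hxK => hx ?_⟩
    have := hg _ _ hxK
    rw [wd_iterate] at this
    simpa using this.symm
  have hmeas : MeasurableSet (⋃ p : {p // p ∈ P}, p.1 \ K p) :=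
    MeasurableSet.iUnion fun p => (hm p.1 p.2).diff (hKc p).measurableSet
  have h1 : μ {x | a ((fullShift A)^[r] x) ≠ g (wd x 0 (2 * r + 1))} ≤ ENNReal.ofReal δ := by
    refine (measure_mono hsub).trans ?_
    rw [(hμ.iterate r).measure_preimage hmeas.nullMeasurableSet]
    refine (measure_iUnion_le _).trans ?_
    rw [tsum_fintype]
    refine (Finset.sum_le_sum fun p _ => (hKm p).le).trans ?_
    rw [Finset.sum_const, Finset.card_univ, hη, ← ENNReal.ofReal_nsmul]
    refine ENNReal.ofReal_le_ofReal (le_of_eq ?_)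
    rw [nsmul_eq_mul]
    field_simp
  exact ENNReal.toReal_le_of_le_ofReal hδ.le h1

lemma wd_sub {A : Type*} (x : ℤ → A) (i n m N : ℕ) (h : i + m ≤ N) (hn : n = m) :
    wd x i m = ((wd x 0 N).drop i).take n := by
  subst hn
  apply List.ext_getElem
  · simp
    omega
  · intro j h1 h2
    simp [wd]

/-- Entropy is at most the mean code length: given a code with lengths `-log π` on words, names of
length `n` with respect to any partition are encoded at a cost of `δ` more per symbol, once
the words are slightly longer than `n`. -/
lemma refinedInfo_le (μ : Measure (ℤ → A)) [IsProbabilityMeasure μ]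
    (hμ : MeasurePreserving (fullShift A) μ μ) {P : Finset (Set (ℤ → A))} (hP : IsMeasPartition P)
    {δ : ℝ} (hδ : 0 < δ) :
    ∃ r : ℕ, ∀ (n : ℕ) (𝓑 : Finset (List A)) (π : List A → ℝ),
      (∀ᵐ x ∂μ, wd x 0 (n + 2 * r) ∈ 𝓑) → (∀ b ∈ 𝓑, 0 < π b) → ∑ b ∈ 𝓑, π b ≤ 1 →
      refinedInfo (fullShift A) μ P n ≤
        n * δ + ∫ x, -Real.log (π (wd x 0 (n + 2 * r))) ∂μ := by
  classical
  have hcov : ∀ x : ℤ → A, ∃ p : {p // p ∈ P}, x ∈ p.1 := by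
    intro x
    have : x ∈ ⋃₀ (↑P : Set (Set (ℤ → A))) := by rw [hP.2.1]; trivial
    obtain ⟨p, hp, hx⟩ := this
    exact ⟨⟨p, hp⟩, hx⟩
  choose a ha using hcov
  have huniq : ∀ (x : ℤ → A) (p : {p // p ∈ P}), x ∈ p.1 ↔ a x = p := by
    refine fun x p => ⟨fun hx => ?_, fun h => h ▸ ha x⟩
    by_contra hne
    have : Disjoint (a x).1 p.1 := hP.2.2 (a x).2 p.2 (fun h => hne (Subtype.ext h))
    exact Set.disjoint_left.1 this (ha x) hx
  have hPne : Nonempty {p // p ∈ P} := by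
    obtain ⟨x⟩ := Measure.nonempty_of_neZero μ
    exact ⟨a x⟩
  obtain ⟨k, hk⟩ : ∃ k : ℝ, k = (Fintype.card {p // p ∈ P} : ℝ) := ⟨_, rfl⟩
  have hk1 : 1 ≤ k := by
    rw [hk]
    exact_mod_cast Fintype.card_pos
  -- `ε` is the weight reserved for misprediction of the partition atom by the word
  set ε : ℝ := 1 - Real.exp (-(δ / 2)) with hε
  have hε0 : 0 < ε := by
    rw [hε, sub_pos, Real.exp_lt_one_iff]
    linarith
  have hε1 : 1 - ε = Real.exp (-(δ / 2)) := by rw [hε]; ring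
  have hεle : ε ≤ 1 := by
    rw [hε]
    linarith [Real.exp_pos (-(δ / 2))]
  set L₂ : ℝ := -Real.log (ε / k) with hL₂
  have hL₂0 : 0 ≤ L₂ := by
    rw [hL₂, neg_nonneg]
    refine Real.log_nonpos (by positivity) ?_
    rw [div_le_one (by positivity)]
    linarith
  obtain ⟨r, g, hr⟩ := exists_approx μ hμ hP a ha (δ := δ / 2 / (L₂ + 1)) (by positivity)
  refine ⟨r, fun n 𝓑 π h𝓑 hπ hπ1 => ?_⟩
  set E : Set (ℤ → A) := {x | a ((fullShift A)^[r] x) ≠ g (wd x 0 (2 * r + 1))} with hE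
  have hameas : ∀ (m : ℕ) (p : {p // p ∈ P}), MeasurableSet {x | a ((fullShift A)^[m] x) = p} := by
    intro m p
    have : {x | a ((fullShift A)^[m] x) = p} = (fullShift A)^[m] ⁻¹' p.1 := by
      ext x
      exact (huniq _ p).symm
    rw [this]
    exact (measurable_shift.iterate m) (hP.1 p.1 p.2)
  have hEmeas : MeasurableSet E := by
    have : E = ⋃ p : {p // p ∈ P},
        {x | a ((fullShift A)^[r] x) = p} ∩ {x | p ≠ g (wd x 0 (2 * r + 1))} := by
      ext x
      simp [hE]
    rw [this]
    exact MeasurableSet.iUnion fun p => (hameas r p).inter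
      (measurableSet_wd 0 (2 * r + 1) fun w => p ≠ g w)
  let name : (ℤ → A) → Fin n → {p // p ∈ P} :=
    fun x i => a ((fullShift A)^[(i : ℕ)] ((fullShift A)^[r] x))
  have hnamemeas : ∀ α, MeasurableSet (name ⁻¹' {α}) := by
    intro α
    have : name ⁻¹' {α} = ⋂ i : Fin n, {x | a ((fullShift A)^[(i : ℕ) + r] x) = α i} := by
      ext x
      simp [name, funext_iff, Function.iterate_add_apply]
    rw [this]
    exact MeasurableSet.iInter fun i => hameas _ _
  have hinfo : refinedInfo (fullShift A) μ P n = ∑ α, negMulLog (μ.real (name ⁻¹' {α})) := by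
    unfold refinedInfo
    refine Finset.sum_congr rfl fun α _ => ?_
    have h1 : name ⁻¹' {α} = (fullShift A)^[r] ⁻¹'
        (⋂ i : Fin n, (fullShift A)^[(i : ℕ)] ⁻¹' ((α i : Set (ℤ → A)))) := by
      ext x
      simp [name, funext_iff, huniq]
    have h2 : MeasurableSet (⋂ i : Fin n, (fullShift A)^[(i : ℕ)] ⁻¹' ((α i : Set (ℤ → A)))) :=
      MeasurableSet.iInter fun i => (measurable_shift.iterate _) (hP.1 _ (α i).2)
    rw [measureReal_def, h1, (hμ.iterate r).measure_preimage h2.nullMeasurableSet]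
  let κ : {p // p ∈ P} → {p // p ∈ P} → ℝ := fun p q => (if p = q then 1 - ε else 0) + ε / k
  have hκpos : ∀ p q, 0 < κ p q := by
    intro p q
    have : 0 < ε / k := by positivity
    simp only [κ]
    split_ifs
    · linarith
    · linarith
  have hκsum : ∀ q, ∑ p, κ p q = 1 := by
    intro q
    simp only [κ, Finset.sum_add_distrib, Finset.sum_ite_eq', Finset.mem_univ, if_true,
      Finset.sum_const, Finset.card_univ, nsmul_eq_mul, ← hk]
    field_simp
    ring
  let win : List A → ℕ → List A := fun b i => (b.drop i).take (2 * r + 1)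
  let q : (Fin n → {p // p ∈ P}) → ℝ :=
    fun α => ∑ b ∈ 𝓑, π b * ∏ i : Fin n, κ (α i) (g (win b i))
  have h𝓑ne : 𝓑.Nonempty := by
    obtain ⟨x, hx⟩ := h𝓑.exists
    exact ⟨_, hx⟩
  have hprodpos : ∀ (α : Fin n → {p // p ∈ P}) b, 0 < ∏ i : Fin n, κ (α i) (g (win b i)) :=
    fun α b => Finset.prod_pos fun i _ => hκpos _ _
  have hqpos : ∀ α, 0 < q α := fun α =>
    Finset.sum_pos (fun b hb => mul_pos (hπ b hb) (hprodpos α b)) h𝓑ne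
  have hqsum : ∑ α, q α ≤ 1 := by
    simp only [q]
    rw [Finset.sum_comm]
    refine le_trans (le_of_eq (Finset.sum_congr rfl fun b _ => ?_)) hπ1
    rw [← Finset.mul_sum, ← Fintype.prod_sum (fun (i : Fin n) p => κ p (g (win b i)))]
    rw [Finset.prod_congr rfl fun i _ => hκsum _, Finset.prod_const_one, mul_one]
  have hpsum : ∑ α, μ.real (name ⁻¹' {α}) = 1 := by
    have := (integrable_fintype_comp μ name hnamemeas (fun _ => (1 : ℝ))).2
    simpa using this.symm
  rw [hinfo]
  refine (gibbs _ q (fun _ => measureReal_nonneg) hpsum hqpos hqsum).trans ?_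
  obtain ⟨hint1, heq1⟩ := integrable_fintype_comp μ name hnamemeas (fun α => -Real.log (q α))
  rw [← heq1]
  have hintπ : Integrable (fun x => -Real.log (π (wd x 0 (n + 2 * r)))) μ := by
    obtain ⟨B, -, hB⟩ := exists_bound
      (continuous_wd_comp (A := A) 0 (n + 2 * r) fun w => -Real.log (π w))
    exact Integrable.of_bound (continuous_wd_comp (A := A) 0 (n + 2 * r)
      fun w => -Real.log (π w)).aestronglyMeasurable B (Eventually.of_forall hB)
  have hintE : ∀ i : ℕ, Integrable (fun x => ((fullShift A)^[i] ⁻¹' E).indicator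
      (fun _ => L₂) x) μ := fun i =>
    (integrable_const L₂).indicator ((measurable_shift.iterate i) hEmeas)
  have hpt : ∀ᵐ x ∂μ, -Real.log (q (name x)) ≤ -Real.log (π (wd x 0 (n + 2 * r))) +
      ∑ i ∈ Finset.range n, (δ / 2 + ((fullShift A)^[i] ⁻¹' E).indicator (fun _ => L₂) x) := by
    filter_upwards [h𝓑] with x hx
    set b := wd x 0 (n + 2 * r) with hb
    have h1 : π b * ∏ i : Fin n, κ (name x i) (g (win b i)) ≤ q (name x) :=
      Finset.single_le_sum (f := fun b => π b * ∏ i : Fin n, κ (name x i) (g (win b i)))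
        (fun b hb => (mul_pos (hπ b hb) (hprodpos _ b)).le) hx
    have h2 := Real.log_le_log (mul_pos (hπ b hx) (hprodpos _ b)) h1
    rw [Real.log_mul (hπ b hx).ne' (hprodpos _ b).ne',
      Real.log_prod (fun i _ => (hκpos _ _).ne')] at h2
    have h3 : ∀ i : Fin n, -Real.log (κ (name x i) (g (win b i))) ≤
        δ / 2 + ((fullShift A)^[(i : ℕ)] ⁻¹' E).indicator (fun _ => L₂) x := by
      intro i
      have hw : win b i = wd ((fullShift A)^[(i : ℕ)] x) 0 (2 * r + 1) := by
        rw [wd_iterate, zero_add]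
        exact (wd_sub x i _ _ _ (by omega) rfl).symm
      have hn : name x i = a ((fullShift A)^[r] ((fullShift A)^[(i : ℕ)] x)) := by
        simp only [name]
        rw [← Function.iterate_add_apply, ← Function.iterate_add_apply, add_comm]
      by_cases hxE : x ∈ (fullShift A)^[(i : ℕ)] ⁻¹' E
      · rw [indicator_of_mem hxE]
        have : ε / k ≤ κ (name x i) (g (win b i)) := by
          simp only [κ]
          split_ifs <;> linarith
        have := Real.log_le_log (by positivity) this
        linarith
      · rw [indicator_of_notMem hxE, add_zero]
        have heq : name x i = g (win b i) := by
          rw [hw, hn]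
          by_contra hne
          exact hxE hne
        have : Real.exp (-(δ / 2)) ≤ κ (name x i) (g (win b i)) := by
          simp only [κ, heq, if_true, hε1]
          have : 0 < ε / k := by positivity
          linarith
        have := Real.log_le_log (Real.exp_pos _) this
        rw [Real.log_exp] at this
        linarith
    have h4 := Finset.sum_le_sum fun i (_ : i ∈ Finset.univ) => h3 i
    rw [Finset.sum_neg_distrib, Fin.sum_univ_eq_sum_range
      (fun i => δ / 2 + ((fullShift A)^[i] ⁻¹' E).indicator (fun _ => L₂) x)] at h4
    linarith
  have hints : ∀ i ∈ Finset.range n, Integrable (fun x => δ / 2 +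
      ((fullShift A)^[i] ⁻¹' E).indicator (fun _ => L₂) x) μ :=
    fun i _ => (integrable_const _).add (hintE i)
  refine (integral_mono_ae hint1 (hintπ.add (integrable_finsetSum _ hints)) hpt).trans ?_
  rw [integral_add' hintπ (integrable_finsetSum _ hints), add_comm]
  gcongr
  rw [integral_finsetSum _ hints]
  have : ∀ i ∈ Finset.range n, ∫ x, (δ / 2 +
      ((fullShift A)^[i] ⁻¹' E).indicator (fun _ => L₂) x) ∂μ ≤ δ := by
    intro i _
    rw [integral_add (integrable_const _) (hintE i), integral_const,
      integral_indicator_const _ ((measurable_shift.iterate i) hEmeas), measureReal_def,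
      measureReal_def, (hμ.iterate i).measure_preimage hEmeas.nullMeasurableSet]
    simp only [measure_univ, ENNReal.toReal_one, smul_eq_mul]
    rw [← measureReal_def]
    have h1 : μ.real E * L₂ ≤ δ / 2 / (L₂ + 1) * L₂ := by gcongr
    have h2 : δ / 2 / (L₂ + 1) * L₂ ≤ δ / 2 := by
      rw [div_mul_eq_mul_div, div_le_iff₀ (by positivity)]
      nlinarith
    linarith
  refine (Finset.sum_le_sum this).trans ?_
  simp

end Coding

/-! ### The initial family of loops -/

section Initial

variable {A : Type*} [Fintype A] [MetricSpace A]

/-- The words of length `n`. -/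
noncomputable def words (A : Type*) [Fintype A] (n : ℕ) : Finset (List A) :=
  (List.finite_length_eq A n).toFinset

@[simp] lemma mem_words {n : ℕ} {w : List A} : w ∈ words A n ↔ w.length = n := by
  simp [words]

lemma eventually_log_le (C D δ : ℝ) (hC : 0 < C) (hδ : 0 < δ) :
    ∀ᶠ n : ℕ in atTop, Real.log (C * (n + 1)) + D ≤ n * δ := by
  have h1 : ∀ᶠ x : ℝ in atTop, ‖Real.log x‖ ≤ δ / 2 * ‖id x‖ :=
    Real.isLittleO_log_id_atTop.def (half_pos hδ)
  have h2 : Tendsto (fun n : ℕ => (n : ℝ) + 1) atTop atTop :=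
    tendsto_atTop_add_const_right _ _ tendsto_natCast_atTop_atTop
  filter_upwards [h2.eventually h1, tendsto_natCast_atTop_atTop.eventually_ge_atTop
    ((Real.log C + D + δ / 2) / (δ / 2))] with n hn1 hn2
  have h3 : (0 : ℝ) < n + 1 := by positivity
  rw [Real.log_mul hC.ne' h3.ne']
  rw [div_le_iff₀ (by positivity)] at hn2
  simp only [id, Real.norm_eq_abs, abs_of_pos h3] at hn1
  have := le_abs_self (Real.log ((n : ℝ) + 1))
  linarith

/-- The gaps between given words of length `L` that connect them inside `S` may be chosen
bounded, since there are finitely many pairs of words. -/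
lemma exists_gap_bound (S : Set (ℤ → A)) (L : ℕ) :
    ∃ M : ℕ, ∀ u v : List A, u.length = L → v.length = L →
      (∃ g ≥ L, ∃ y ∈ S, wd y 0 L = v ∧ wd y g L = u) →
      ∃ g ≥ L, g ≤ M ∧ ∃ y ∈ S, wd y 0 L = v ∧ wd y g L = u := by
  classical
  let G : List A × List A → ℕ := fun p =>
    if h : ∃ g ≥ L, ∃ y ∈ S, wd y 0 L = p.2 ∧ wd y g L = p.1 then h.choose else 0
  refine ⟨(words A L ×ˢ words A L).sup G, fun u v hu hv h => ?_⟩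
  have e : G (u, v) = h.choose := dif_pos h
  obtain ⟨h1, h2⟩ := h.choose_spec
  refine ⟨h.choose, h1, ?_, h2⟩
  rw [← e]
  exact Finset.le_sup (f := G) (by simp [hu, hv])

variable [MeasurableSpace (ℤ → A)] [BorelSpace (ℤ → A)]

lemma integrable_cont (μ : Measure (ℤ → A)) [IsFiniteMeasure μ] {f : (ℤ → A) → ℝ}
    (hf : Continuous f) : Integrable f μ := by
  obtain ⟨B, -, hB⟩ := exists_bound hf
  exact Integrable.of_bound hf.aestronglyMeasurable B (Eventually.of_forall hB)

lemma integral_comp_iterate {μ : Measure (ℤ → A)} (hμ : MeasurePreserving (fullShift A) μ μ)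
    {f : (ℤ → A) → ℝ} (hf : Continuous f) (i : ℕ) :
    ∫ x, f ((fullShift A)^[i] x) ∂μ = ∫ x, f x ∂μ := by
  have h := hμ.iterate i
  conv_rhs => rw [← h.map_eq]
  rw [integral_map h.measurable.aemeasurable hf.aestronglyMeasurable]

lemma integral_birkhoff {μ : Measure (ℤ → A)} [IsFiniteMeasure μ]
    (hμ : MeasurePreserving (fullShift A) μ μ)
    {f : (ℤ → A) → ℝ} (hf : Continuous f) (n : ℕ) :
    ∫ x, birkhoffSum (fullShift A) f n x ∂μ = n * ∫ x, f x ∂μ := by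
  unfold birkhoffSum
  rw [integral_finsetSum (f := fun i x => f ((fullShift A)^[i] x)) _
    fun i _ => integrable_cont μ (hf.comp (continuous_shift_iterate i))]
  simp [integral_comp_iterate hμ hf]

lemma continuous_birkhoff {f : (ℤ → A) → ℝ} (hf : Continuous f) (n : ℕ) :
    Continuous (birkhoffSum (fullShift A) f n) :=
  continuous_finsetSum _ fun i _ => hf.comp (continuous_shift_iterate i)

lemma refinedInfo_nonneg {α : Type*} [MeasurableSpace α] (f : α → α) (μ : Measure α)
    [IsProbabilityMeasure μ] (P : Finset (Set α)) (n : ℕ) : 0 ≤ refinedInfo f μ P n := by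
  refine Finset.sum_nonneg fun a _ => ?_
  unfold negMulLog
  rw [neg_nonneg]
  exact mul_nonpos_of_nonneg_of_nonpos ENNReal.toReal_nonneg
    (Real.log_nonpos ENNReal.toReal_nonneg measureReal_le_one)

lemma integral_supSum_le {S : Set (ℤ → A)} {ρ : (ℤ → A) → ℝ} (hρ : Continuous ρ)
    {μ : Measure (ℤ → A)} [IsProbabilityMeasure μ] (hμ : MeasurePreserving (fullShift A) μ μ)
    (hμS : μ Sᶜ = 0) {ε : ℝ} (hε : 0 < ε) :
    ∃ n₀, ∀ n ≥ n₀, ∫ x, supSum S ρ (wd x 0 n) ∂μ ≤ n * (∫ x, ρ x ∂μ) + n * ε := by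
  obtain ⟨n₀, h⟩ := birkhoff_osc hρ hε
  refine ⟨n₀, fun n hn => ?_⟩
  have h1 : ∀ᵐ x ∂μ, supSum S ρ (wd x 0 n) ≤ birkhoffSum (fullShift A) ρ n x + n * ε := by
    have : ∀ᵐ x ∂μ, x ∈ S := hμS
    filter_upwards [this] with x hx
    refine supSum_le (wd_length _ _ _) ⟨x, hx, rfl⟩ fun y _ hyx => ?_
    have := (abs_le.1 (h n hn y x hyx)).2
    linarith
  refine (integral_mono_ae (integrable_cont μ (continuous_wd_comp 0 n (supSum S ρ)))
    ((integrable_cont μ (continuous_birkhoff hρ n)).add (integrable_const _)) h1).trans ?_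
  rw [integral_add' (integrable_cont μ (continuous_birkhoff hρ n)) (integrable_const _),
    integral_birkhoff hμ hρ]
  simp

/-- A family of words `class` sharing their first `L` letters `u`, sharing their last `L` letters
and extended by a common connecting word consists of loops at `u`. -/
lemma stage_of_class {S : Set (ℤ → A)} (hS : fullShift A '' S = S) {L : ℕ} (hG : Glues S L)
    {ρ : (ℤ → A) → ℝ} (hρ : Continuous ρ) {B : ℝ} (hB : ∀ x, |ρ x| ≤ B) (hB0 : 0 < B)
    {c : ℝ} (hc : 0 < c)
    {n g M : ℕ} (hn : 0 < n) (hLn : L ≤ n) {u v : List A} (hgL : L ≤ g) (hgM : g ≤ M) {y : ℤ → A}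
    (hy : y ∈ S) (hyv : wd y 0 L = v) (hyu : wd y g L = u) (C : Finset (List A)) (hne : C.Nonempty)
    (hC : ∀ b ∈ C, ∃ x ∈ S, wd x 0 n = b ∧ wd x 0 L = u ∧ wd x ((n - L : ℕ) : ℤ) L = v)
    (hbig : ∀ b ∈ C, c * (supSum S ρ b + M * B) + 2 ≤ Real.log C.card) :
    ∃ W m, Stage S ρ c u W m := by
  classical
  have hul : u.length = L := by rw [← hyu, wd_length]
  set t := wd y L (g - L) with ht
  have htl : t.length = g - L := wd_length _ _ _
  have hloop : ∀ b ∈ C, b.length = n ∧ IsLoop S u (b ++ t) := by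
    intro b hb
    obtain ⟨x, hx, h1, h2, h3⟩ := hC b hb
    have hbl : b.length = n := by rw [← h1, wd_length]
    refine ⟨hbl, ?_⟩
    obtain ⟨z, hz, e1, e2⟩ := hG x hx y hy (n - L) (h3.trans hyv.symm)
    rw [Nat.sub_add_cancel hLn] at e1
    have hz1 : wd z 0 n = b := e1.trans h1
    have hlen : (b ++ t).length = n + (g - L) := by rw [List.length_append, hbl, htl]
    refine ⟨z, hz, ?_, ?_, ?_⟩
    · rw [hlen, wd_add, hz1, ht]
      congr 1
      refine wd_congr fun j hj => ?_
      rw [e2 _ (by omega)]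
      congr 1
      omega
    · rw [hul]
      conv_rhs => rw [← h2]
      rw [wd_eq_wd_iff] at e1
      exact wd_congr fun j hj => e1 j (by omega)
    · rw [hul, hlen]
      conv_rhs => rw [← hyu]
      refine wd_congr fun j hj => ?_
      rw [e2 _ (by omega)]
      congr 1
      omega
  have hcard : (C.image (· ++ t)).card = C.card :=
    Finset.card_image_of_injective _ (List.append_left_injective t)
  refine ⟨C.image (· ++ t), n + (g - L), by omega, hne.image _, ?_, ?_, ?_⟩
  · intro w hw
    obtain ⟨b, hb, rfl⟩ := Finset.mem_image.1 hw
    rw [List.length_append, (hloop b hb).1, htl]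
  · intro w hw
    obtain ⟨b, hb, rfl⟩ := Finset.mem_image.1 hw
    exact (hloop b hb).2
  · intro w hw
    obtain ⟨b, hb, rfl⟩ := Finset.mem_image.1 hw
    rw [hcard]
    refine le_trans ?_ (hbig b hb)
    have h1 := supSum_append_le hS hρ (hloop b hb).2.occurs
    have h2 : supSum S ρ t ≤ t.length * B := by
      refine supSum_le_length hB ?_
      obtain ⟨x, hx, hxw⟩ := (hloop b hb).2.occurs
      rw [List.length_append] at hxw
      exact ⟨_, iterate_mem hS _ hx, (wd_append_right rfl hxw).2⟩
    have h3 : (t.length : ℝ) * B ≤ M * B := by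
      gcongr
      omega
    have h4 : supSum S ρ (b ++ t) ≤ supSum S ρ b + M * B := by linarith
    have := mul_le_mul_of_nonneg_left h4 hc.le
    linarith

/-- Entropy larger than `c ∫ ρ` gives, by counting recurrent words with prescribed ends and
prescribed (up to a bounded error) Birkhoff sum of `ρ`, an initial family of loops. -/
lemma exists_stage {S : Set (ℤ → A)} (hS : fullShift A '' S = S) {L : ℕ} (hG : Glues S L)
    {ρ : (ℤ → A) → ℝ} (hρ : Continuous ρ) (hpos : ∀ x ∈ S, 0 < ρ x) {c : ℝ} (hc : 0 < c)
    {μ : Measure (ℤ → A)} [IsProbabilityMeasure μ] (hμ : MeasurePreserving (fullShift A) μ μ)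
    (hμS : μ Sᶜ = 0) {P : Finset (Set (ℤ → A))} (hP : IsMeasPartition P)
    (hh : c * (∫ x, ρ x ∂μ) < partEntropy (fullShift A) μ P) :
    ∃ u W n, u.length = L ∧ Stage S ρ c u W n := by
  classical
  obtain ⟨B, hB0, hB⟩ := exists_bound hρ
  set I := ∫ x, ρ x ∂μ with hI
  obtain ⟨d, hd⟩ : ∃ d, d = partEntropy (fullShift A) μ P - c * I := ⟨_, rfl⟩
  have hd0 : 0 < d := by linarith
  obtain ⟨r, hr⟩ := refinedInfo_le μ hμ hP (δ := d / 8) (by positivity)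
  obtain ⟨n₁, hn₁⟩ := integral_supSum_le hρ hμ hμS (ε := d / 8 / c) (by positivity)
  obtain ⟨M, hM⟩ := exists_gap_bound S L
  have hfreq : ∃ᶠ n : ℕ in atTop, c * I + 7 / 8 * d < refinedInfo (fullShift A) μ P n / n := by
    refine frequently_lt_of_lt_limsup ?_ ?_
    · exact isCoboundedUnder_le_of_le _ (x := 0)
        fun n => div_nonneg (refinedInfo_nonneg _ _ _ _) (Nat.cast_nonneg n)
    · change _ < partEntropy (fullShift A) μ P
      linarith
  -- the number of keys is at most `Q (n + 1)`
  set Q : ℝ := ((words A L).card * (words A L).card + 1) * (c * B * (1 + 2 * r) + 1) with hQ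
  have hQ0 : 0 < Q := by positivity
  have hev : ∀ᶠ n : ℕ in atTop, Real.log (Q * (n + 1)) + (3 + c * (M * B)) ≤ n * (d / 8) :=
    eventually_log_le _ _ _ hQ0 (by positivity)
  have hev2 : ∀ᶠ n : ℕ in atTop, 2 * r * (c * I + d / 8) / (d / 2) ≤ (n : ℝ) :=
    tendsto_natCast_atTop_atTop.eventually_ge_atTop _
  obtain ⟨n, hn, ⟨h1, h2⟩, h3⟩ := (hfreq.and_eventually ((hev.and hev2).and
    (eventually_ge_atTop (n₁ + L + 1)))).exists
  have hn0 : (0 : ℝ) < n := by exact_mod_cast (by omega : 0 < n)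
  set N := n + 2 * r with hN
  let R : List A → Prop := fun b => ∃ x ∈ S, (∃ m : ℕ, N ≤ m ∧ wd x m N = b) ∧ wd x 0 N = b
  set 𝓑 : Finset (List A) := (words A N).filter R with h𝓑
  let key : List A → (List A × List A) × ℕ := fun b =>
    ((b.take L, b.drop (N - L)), ⌊c * supSum S ρ b⌋₊)
  let cl : List A → Finset (List A) := fun b => 𝓑.filter fun b' => key b' = key b
  have hocc : ∀ b ∈ 𝓑, ∃ x ∈ S, wd x 0 b.length = b := by
    intro b hb
    obtain ⟨hb1, x, hx, -, hxb⟩ := Finset.mem_filter.1 hb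
    rw [mem_words] at hb1
    exact ⟨x, hx, by rw [hb1, hxb]⟩
  have hae : ∀ᵐ x ∂μ, wd x 0 N ∈ 𝓑 := by
    have hSae : ∀ᵐ x ∂μ, x ∈ S := hμS
    have hrec : ∀ᵐ x ∂μ, ∀ b ∈ words A N, x ∈ {x | wd x 0 N = b} →
        ∃ᶠ m in atTop, (fullShift A)^[m] x ∈ {x | wd x 0 N = b} := by
      rw [eventually_all_finset]
      exact fun b _ => hμ.conservative.ae_mem_imp_frequently_image_mem
        (measurableSet_wd 0 N fun w => w = b).nullMeasurableSet
    filter_upwards [hSae, hrec] with x hx hx2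
    refine Finset.mem_filter.2 ⟨by simp, x, hx, ?_, rfl⟩
    obtain ⟨m, hm, hm2⟩ := (frequently_atTop.1 (hx2 (wd x 0 N) (by simp) rfl)) N
    refine ⟨m, hm, ?_⟩
    have : wd ((fullShift A)^[m] x) 0 N = wd x 0 N := hm2
    rwa [wd_iterate, zero_add] at this
  have hself : ∀ b ∈ 𝓑, b ∈ cl b := fun b hb => Finset.mem_filter.2 ⟨hb, rfl⟩
  have hclpos : ∀ b ∈ 𝓑, (0 : ℝ) < (cl b).card := fun b hb => by
    exact_mod_cast Finset.card_pos.2 ⟨b, hself b hb⟩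
  have h𝓑ne : 𝓑.Nonempty := by
    obtain ⟨x, hx⟩ := hae.exists
    exact ⟨_, hx⟩
  set κ : ℝ := ((𝓑.image key).card : ℝ) with hκ
  have hκ0 : 0 < κ := by
    rw [hκ]
    exact_mod_cast Finset.card_pos.2 (h𝓑ne.image key)
  have hκle : κ ≤ Q * (n + 1) := by
    have hsub : 𝓑.image key ⊆ (words A L ×ˢ words A L) ×ˢ Finset.range (⌊c * (N * B)⌋₊ + 1) := by
      intro k hk
      obtain ⟨b, hb, rfl⟩ := Finset.mem_image.1 hk
      have hbl : b.length = N := mem_words.1 (Finset.mem_filter.1 hb).1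
      have h5 := supSum_le_length hB (hocc b hb)
      rw [hbl] at h5
      have h6 : ⌊c * supSum S ρ b⌋₊ ≤ ⌊c * (N * B)⌋₊ := Nat.floor_mono (by gcongr)
      simp only [key, Finset.mem_product, mem_words, List.length_take, List.length_drop, hbl,
        Finset.mem_range]
      omega
    have h5 := Finset.card_le_card hsub
    rw [Finset.card_product, Finset.card_product, Finset.card_range] at h5
    have h6 : κ ≤ ((words A L).card * (words A L).card) * ((⌊c * (N * B)⌋₊ : ℝ) + 1) := by
      rw [hκ]
      exact_mod_cast h5
    have h7 : (⌊c * (N * B)⌋₊ : ℝ) ≤ c * (N * B) := Nat.floor_le (by positivity)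
    have h8 : c * (N * B) + 1 ≤ (c * B * (1 + 2 * r) + 1) * (n + 1) := by
      rw [hN]
      push_cast
      have : 0 ≤ c * B := by positivity
      have : 0 ≤ c * B * r * n := by positivity
      nlinarith
    calc κ ≤ _ := h6
      _ ≤ ((words A L).card * (words A L).card + 1) * ((c * B * (1 + 2 * r) + 1) * (n + 1)) := by
        gcongr
        · linarith
        · linarith
      _ = Q * (n + 1) := by rw [hQ]; ring
  let π : List A → ℝ := fun b => (κ * (cl b).card)⁻¹
  have hπpos : ∀ b ∈ 𝓑, 0 < π b := fun b hb => inv_pos.2 (mul_pos hκ0 (hclpos b hb))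
  have hπsum : ∑ b ∈ 𝓑, π b ≤ 1 := by
    rw [← Finset.sum_fiberwise_of_maps_to (t := 𝓑.image key) (g := key)
      fun b hb => Finset.mem_image_of_mem _ hb]
    have : ∀ k ∈ 𝓑.image key, ∑ b ∈ 𝓑 with key b = k, π b = κ⁻¹ := by
      intro k hk
      obtain ⟨b, hb, rfl⟩ := Finset.mem_image.1 hk
      have h5 : ∀ b' ∈ 𝓑.filter (fun b' => key b' = key b), π b' = (κ * (cl b).card)⁻¹ := by
        intro b' hb'
        have : key b' = key b := (Finset.mem_filter.1 hb').2
        simp only [π, cl, this]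
      rw [Finset.sum_congr rfl h5, Finset.sum_const, nsmul_eq_mul]
      change ((cl b).card : ℝ) * _ = _
      have := hclpos b hb
      field_simp
    rw [Finset.sum_congr rfl this, Finset.sum_const, nsmul_eq_mul, ← hκ,
      mul_inv_cancel₀ hκ0.ne']
  have hinfo := hr n 𝓑 π hae hπpos hπsum
  obtain ⟨b₀, hb₀, hb₀big⟩ : ∃ b ∈ 𝓑, c * supSum S ρ b + n * (d / 8) ≤
      Real.log κ + Real.log (cl b).card := by
    by_contra hcon
    push Not at hcon
    have h5 : ∀ᵐ x ∂μ, -Real.log (π (wd x 0 N)) ≤ c * supSum S ρ (wd x 0 N) + n * (d / 8) := by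
      filter_upwards [hae] with x hx
      have := hcon _ hx
      simp only [π]
      rw [Real.log_inv, neg_neg, Real.log_mul hκ0.ne' (hclpos _ hx).ne']
      exact this.le
    have h6 := integral_mono_ae
      (integrable_cont μ (continuous_wd_comp 0 N fun w => -Real.log (π w)))
      (integrable_cont μ (continuous_wd_comp 0 N fun w => c * supSum S ρ w + n * (d / 8))) h5
    have h7 : ∫ x, (c * supSum S ρ (wd x 0 N) + n * (d / 8)) ∂μ =
        c * (∫ x, supSum S ρ (wd x 0 N) ∂μ) + n * (d / 8) := by
      rw [integral_add (integrable_cont μ (continuous_wd_comp 0 N fun w => c * supSum S ρ w))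
        (integrable_const _), integral_const_mul]
      simp
    rw [h7] at h6
    have h8 := mul_le_mul_of_nonneg_left (hn₁ N (by omega)) hc.le
    have h9 : c * (N * I + N * (d / 8 / c)) = N * (c * I + d / 8) := by
      field_simp
    rw [h9] at h8
    rw [lt_div_iff₀ hn0] at hn
    rw [div_le_iff₀ (by positivity)] at h2
    have h10 : (N : ℝ) = n + 2 * r := by rw [hN]; push_cast; ring
    rw [h10] at h8
    nlinarith
  obtain ⟨hb₀w, x, hx, ⟨m, hm, hm2⟩, hxb⟩ := Finset.mem_filter.1 hb₀
  have hLN : L ≤ N := by omega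
  obtain ⟨g, hgL, hgM, y, hy, hyv, hyu⟩ := hM (wd x 0 L) (wd x ((N - L : ℕ) : ℤ) L) (by simp)
    (by simp) ⟨m - (N - L), by omega, (fullShift A)^[N - L] x, iterate_mem hS _ hx,
      by rw [wd_iterate, zero_add], by
        rw [wd_iterate]
        have h5 := hm2.trans hxb.symm
        rw [wd_eq_wd_iff] at h5
        refine wd_congr fun j hj => ?_
        rw [← h5 j (by omega)]
        congr 1
        omega⟩
  have hends : ∀ z : ℤ → A, (wd z 0 N).take L = wd z 0 L ∧
      (wd z 0 N).drop (N - L) = wd z ((N - L : ℕ) : ℤ) L := by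
    intro z
    constructor
    · have := wd_sub z 0 L L N (by omega) rfl
      simpa using this.symm
    · rw [wd_sub z (N - L) L L N (by omega) rfl, List.take_of_length_le]
      simp
      omega
  have hkey0 : key b₀ = ((wd x 0 L, wd x ((N - L : ℕ) : ℤ) L), ⌊c * supSum S ρ b₀⌋₊) := by
    simp only [key]
    conv_lhs => rw [← hxb, (hends x).1, (hends x).2]
    rw [hxb]
  have hlogκ := Real.log_le_log hκ0 hκle
  obtain ⟨W, k, hW⟩ := stage_of_class hS hG hρ hB hB0 hc (n := N) (g := g) (M := M) (by omega) hLN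
    hgL hgM hy hyv hyu (cl b₀) ⟨b₀, hself b₀ hb₀⟩
    (by
      intro b hb
      obtain ⟨hb1, hb2⟩ := Finset.mem_filter.1 hb
      obtain ⟨-, z, hz, -, hzb⟩ := Finset.mem_filter.1 hb1
      rw [hkey0] at hb2
      simp only [key, Prod.mk.injEq] at hb2
      rw [← hzb, (hends z).1, (hends z).2] at hb2
      exact ⟨z, hz, hzb, hb2.1.1, hb2.1.2⟩)
    (by
      intro b hb
      obtain ⟨hb1, hb2⟩ := Finset.mem_filter.1 hb
      have h5 : ⌊c * supSum S ρ b⌋₊ = ⌊c * supSum S ρ b₀⌋₊ := congrArg Prod.snd hb2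
      have h6 := Nat.lt_floor_add_one (c * supSum S ρ b)
      have h7 := Nat.floor_le (mul_nonneg hc.le (supSum_nonneg hS hρ hpos (hocc b₀ hb₀)))
      rw [h5] at h6
      linarith)
  exact ⟨_, W, k, by simp, hW⟩

end Initial

/-! ### The tower of concatenation systems -/

section TowerSec

variable {A : Type*} [Fintype A] [MetricSpace A]

/-- A sequence of families of loops at `u`, each made of concatenations of the previous one. -/
structure Tower (S : Set (ℤ → A)) (ρ : (ℤ → A) → ℝ) (c : ℝ) (u : List A)
    (W : ℕ → Finset (List A)) (n : ℕ → ℕ) : Prop where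
  stage : ∀ k, Stage S ρ c u (W k) (n k)
  next : ∀ k, Next S ρ c (W k) (W (k + 1))
  len : ∀ k, n (k + 1) = (W k).card * n k

/-- The bi-infinite concatenations of words of `W` (with common length `n`), with any phase `j`. -/
def concat (W : Finset (List A)) (n : ℕ) : Set (ℤ → A) :=
  {x | ∃ j : ℤ, ∀ t : ℤ, wd x (j + t * n) n ∈ W}

lemma wd_blocks (x : ℤ → A) (i : ℤ) (m n : ℕ) :
    wd x i (m * n) = ((List.range m).map fun s : ℕ => wd x (i + s * n) n).flatten := by
  induction m with
  | zero => simp [wd]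
  | succ m ih =>
    rw [Nat.succ_mul, wd_add, ih, List.range_succ]
    simp

lemma concat_phase {W : Finset (List A)} {n : ℕ} (hn : 0 < n) {x : ℤ → A} (hx : x ∈ concat W n) :
    ∃ j : ℕ, j < n ∧ ∀ t : ℤ, wd x (j + t * n) n ∈ W := by
  obtain ⟨j, hj⟩ := hx
  have h0 := Int.emod_nonneg j (b := n) (by omega)
  have h1 := Int.emod_lt_of_pos j (b := n) (by omega)
  refine ⟨(j % n).toNat, by omega, fun t => ?_⟩
  have := hj (t - j / n)
  rw [Int.toNat_of_nonneg h0]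
  convert this using 2
  have := Int.emod_add_mul_ediv j n
  linarith

lemma isClosed_concat (W : Finset (List A)) {n : ℕ} (hn : 0 < n) : IsClosed (concat W n) := by
  have : concat W n = ⋃ j : Fin n, ⋂ t : ℤ, {x | wd x ((j : ℕ) + t * n) n ∈ W} := by
    ext x
    simp only [mem_iUnion, mem_iInter, mem_ofPred_eq]
    constructor
    · intro hx
      obtain ⟨j, hj, h⟩ := concat_phase hn hx
      exact ⟨⟨j, hj⟩, h⟩
    · rintro ⟨j, h⟩
      exact ⟨_, h⟩
  rw [this]
  exact isClosed_iUnion_of_finite fun j => isClosed_iInter fun t =>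
    (isClopen_wd _ n fun w => w ∈ W).isClosed

lemma concat_iterate {W : Finset (List A)} {n : ℕ} {x : ℤ → A} (hx : x ∈ concat W n) (i : ℕ) :
    (fullShift A)^[i] x ∈ concat W n := by
  obtain ⟨j, hj⟩ := hx
  refine ⟨j - i, fun t => ?_⟩
  rw [wd_iterate]
  convert hj t using 2
  ring

lemma concat_nonempty {W : Finset (List A)} {n : ℕ} (hn : 0 < n) (hne : W.Nonempty)
    (hl : ∀ w ∈ W, w.length = n) : (concat W n).Nonempty := by
  obtain ⟨w, hw⟩ := hne
  have hlt : ∀ i : ℤ, (i % n).toNat < w.length := by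
    intro i
    have h0 := Int.emod_nonneg i (b := n) (by omega)
    have h1 := Int.emod_lt_of_pos i (b := n) (by omega)
    rw [hl w hw]
    omega
  refine ⟨fun i => w[(i % n).toNat]'(hlt i), 0, fun t => ?_⟩
  convert hw
  apply List.ext_getElem
  · simp [hl w hw]
  · intro s h1 h2
    rw [hl w hw] at h2
    simp only [wd, List.getElem_map, List.getElem_range]
    congr 1
    rw [zero_add, add_comm, Int.add_mul_emod_self_right, Int.emod_eq_of_lt (by omega) (by omega)]
    simp

lemma concat_subset {S : Set (ℤ → A)} (hSc : IsClosed S) (hS : fullShift A '' S = S) {u : List A}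
    (hG : Glues S u.length) {W : Finset (List A)} {n : ℕ} (hn : 0 < n)
    (hW : ∀ w ∈ W, IsLoop S u w) : concat W n ⊆ S := by
  intro x hx
  obtain ⟨j, hjn, hj⟩ := concat_phase hn hx
  rw [← hSc.closure_eq, mem_closure_iff]
  intro U hU hxU
  obtain ⟨r, hr⟩ := exists_window_subset hU hxU
  -- the window `[-r, r]` is covered by the blocks with indices from `-(r + 1)` to `r`
  set T := r + 1 with hT
  have h1 : IsLoop S u (wd x (j - T * n) (2 * T * n)) := by
    rw [wd_blocks]
    refine IsLoop.flatten hG _ (by simp [hT]) fun w hw => hW w ?_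
    obtain ⟨s, -, rfl⟩ := List.mem_map.1 hw
    convert hj (s - T) using 2
    ring
  obtain ⟨z, hz, hzw⟩ := h1.occurs
  rw [wd_length, wd_eq_wd_iff] at hzw
  refine ⟨fun i => z (i + (T * n - j)), hr _ fun i hi => ?_, translate_mem hS _ hz⟩
  rw [abs_le] at hi
  have hTn : (T : ℤ) ≤ T * n := by nlinarith
  have hTr : (r : ℤ) < T := by omega
  have hTj : (r : ℤ) + j < T * n := by
    have : (n : ℤ) ≥ 1 := by omega
    have : (j : ℤ) + 1 ≤ n := by omega
    have : 0 ≤ (r : ℤ) * (n - 1) := mul_nonneg (by omega) (by omega)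
    have e : (T : ℤ) * n = r * (n - 1) + r + n := by rw [hT]; push_cast; ring
    omega
  have h2 := hzw (i + (T * n - j)).toNat (by
    zify
    rw [Int.toNat_of_nonneg (by omega)]
    have : (2 * T * n : ℤ) = T * n + T * n := by ring
    omega)
  rw [Int.toNat_of_nonneg (by omega)] at h2
  rw [zero_add] at h2
  rw [h2]
  congr 1
  ring

variable {S : Set (ℤ → A)} {ρ : (ℤ → A) → ℝ} {c : ℝ} {u : List A}
  {W : ℕ → Finset (List A)} {n : ℕ → ℕ}

lemma Tower.two_le (h : Tower S ρ c u W n) (hS : fullShift A '' S = S) (hρ : Continuous ρ)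
    (hpos : ∀ x ∈ S, 0 < ρ x) (hc : 0 < c) (k : ℕ) : 2 ≤ (W k).card := by
  obtain ⟨w, hw⟩ := (h.stage k).nonempty
  have h1 := (h.stage k).big w hw
  have h2 := supSum_nonneg hS hρ hpos ((h.stage k).loop w hw).occurs
  have h3 : 0 < Real.log (W k).card := by
    have := mul_nonneg hc.le h2
    linarith
  by_contra hlt
  have : ((W k).card : ℝ) ≤ 1 := by exact_mod_cast (by omega : (W k).card ≤ 1)
  exact absurd h3 (not_lt.2 (Real.log_nonpos (by positivity) this))

lemma Tower.tendsto (h : Tower S ρ c u W n) (hS : fullShift A '' S = S) (hρ : Continuous ρ)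
    (hpos : ∀ x ∈ S, 0 < ρ x) (hc : 0 < c) : Tendsto n atTop atTop := by
  refine StrictMono.tendsto_atTop (strictMono_nat_of_lt_succ fun k => ?_)
  rw [h.len]
  have := h.two_le hS hρ hpos hc k
  have := (h.stage k).pos
  nlinarith

lemma Tower.concat_succ (h : Tower S ρ c u W n) (k : ℕ) :
    concat (W (k + 1)) (n (k + 1)) ⊆ concat (W k) (n k) := by
  rintro x ⟨j, hj⟩
  refine ⟨j, fun t => ?_⟩
  have hm : (0 : ℤ) < (W k).card := by exact_mod_cast Finset.card_pos.2 (h.stage k).nonempty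
  have h0 := Int.emod_nonneg t hm.ne'
  have h1 := Int.emod_lt_of_pos t hm
  obtain ⟨l, hl, e⟩ := (h.next k).perm _ (hj (t / (W k).card))
  rw [h.len, wd_blocks] at e
  have hmem : ∀ w ∈ l, w ∈ W k := fun w hw => Finset.mem_toList.1 ((hl.mem_iff).1 hw)
  have e2 := flatten_inj_of_length (h.stage k).pos _ _ (by
    intro w hw
    obtain ⟨s, -, rfl⟩ := List.mem_map.1 hw
    simp) (fun w hw => (h.stage k).len w (hmem w hw)) e
  refine hmem _ ?_
  rw [← e2]
  refine List.mem_map.2 ⟨(t % (W k).card).toNat, by rw [List.mem_range]; omega, ?_⟩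
  rw [Int.toNat_of_nonneg h0]
  congr 1
  have := Int.emod_add_mul_ediv t (W k).card
  rw [Nat.cast_mul]
  conv_rhs => rw [← this]
  ring

/-- The limit system of the tower. -/
def towerSet (W : ℕ → Finset (List A)) (n : ℕ → ℕ) : Set (ℤ → A) := ⋂ k, concat (W k) (n k)

lemma Tower.isClosed (h : Tower S ρ c u W n) : IsClosed (towerSet W n) :=
  isClosed_iInter fun k => isClosed_concat _ (h.stage k).pos

lemma Tower.nonempty (h : Tower S ρ c u W n) : (towerSet W n).Nonempty :=
  IsCompact.nonempty_iInter_of_sequence_nonempty_isCompact_isClosed _ h.concat_succ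
    (fun k => concat_nonempty (h.stage k).pos (h.stage k).nonempty (h.stage k).len)
    (isClosed_concat _ (h.stage 0).pos).isCompact
    (fun k => isClosed_concat _ (h.stage k).pos)

lemma towerSet_iterate {x : ℤ → A} (hx : x ∈ towerSet W n) (i : ℕ) :
    (fullShift A)^[i] x ∈ towerSet W n :=
  mem_iInter.2 fun k => concat_iterate (mem_iInter.1 hx k) i

lemma Tower.subset (h : Tower S ρ c u W n) (hSc : IsClosed S) (hS : fullShift A '' S = S)
    (hG : Glues S u.length) (k : ℕ) : concat (W k) (n k) ⊆ S :=
  concat_subset hSc hS hG (h.stage k).pos (h.stage k).loop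

end TowerSec

/-! ### Uniform convergence of Birkhoff averages -/

section Averages

variable {A : Type*} [Fintype A] [MetricSpace A]

lemma birkhoff_flatten {S : Set (ℤ → A)} (hS : fullShift A '' S = S) {f : (ℤ → A) → ℝ}
    (hf : Continuous f) {n : ℕ} {ε : ℝ}
    (hosc : ∀ x y : ℤ → A, wd x 0 n = wd y 0 n →
      |birkhoffSum (fullShift A) f n x - birkhoffSum (fullShift A) f n y| ≤ n * ε)
    (l : List (List A)) (hl : ∀ w ∈ l, w.length = n) {x : ℤ → A} (hx : x ∈ S)
    (hxl : wd x 0 (l.length * n) = l.flatten) :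
    |birkhoffSum (fullShift A) f (l.length * n) x - (l.map (supSum S f)).sum| ≤
      (l.length * n : ℕ) * ε := by
  induction l generalizing x with
  | nil => simp
  | cons w l ih =>
    rw [List.length_cons, Nat.succ_mul, add_comm (l.length * n) n] at hxl ⊢
    rw [List.flatten_cons] at hxl
    obtain ⟨h1, h2⟩ := wd_append_right (hl w (by simp)) hxl
    have h3 := ih (fun w' hw' => hl w' (by simp [hw'])) (iterate_mem hS n hx) h2
    have h4 := le_supSum hf hx h1
    have h5 : supSum S f w ≤ birkhoffSum (fullShift A) f n x + n * ε := by
      refine supSum_le (hl w (by simp)) ⟨x, hx, h1⟩ fun y _ hy => ?_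
      have := (abs_le.1 (hosc y x (hy.trans h1.symm))).2
      linarith
    rw [birkhoffSum_add, List.map_cons, List.sum_cons]
    rw [abs_le] at h3 ⊢
    push_cast at h3 ⊢
    constructor <;> linarith

lemma birkhoff_blocks {f : (ℤ → A) → ℝ} {m : ℕ} {V : Finset (List A)} {S : Set (ℤ → A)}
    (hS : fullShift A '' S = S) {α ε : ℝ}
    (h : ∀ x ∈ S, wd x 0 m ∈ V → |birkhoffSum (fullShift A) f m x - m * α| ≤ m * ε)
    {x : ℤ → A} (hx : x ∈ S) (hxV : ∀ t : ℕ, wd x (t * m) m ∈ V) (q : ℕ) :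
    |birkhoffSum (fullShift A) f (q * m) x - (q * m : ℕ) * α| ≤ (q * m : ℕ) * ε := by
  induction q with
  | zero => simp
  | succ q ih =>
    rw [Nat.succ_mul, birkhoffSum_add]
    have h1 := h _ (iterate_mem hS (q * m) hx) (by
      rw [wd_iterate, zero_add]
      exact_mod_cast hxV q)
    rw [abs_le] at h1 ih ⊢
    push_cast at h1 ih ⊢
    constructor <;> linarith

lemma birkhoff_concat {f : (ℤ → A) → ℝ} {B : ℝ} (hB : ∀ x, |f x| ≤ B) {m : ℕ} (hm : 0 < m)
    {V : Finset (List A)} {S : Set (ℤ → A)} (hS : fullShift A '' S = S) (hVS : concat V m ⊆ S)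
    {α ε : ℝ} (hε : 0 < ε)
    (h : ∀ x ∈ S, wd x 0 m ∈ V → |birkhoffSum (fullShift A) f m x - m * α| ≤ m * ε)
    {x : ℤ → A} (hx : x ∈ concat V m) (N : ℕ) :
    |birkhoffSum (fullShift A) f N x - N * α| ≤ N * ε + 2 * m * (B + |α|) := by
  have hB0 : 0 ≤ B := (abs_nonneg _).trans (hB x)
  have triv : ∀ (s : ℕ) (y : ℤ → A), s ≤ m →
      |birkhoffSum (fullShift A) f s y - s * α| ≤ m * (B + |α|) := by
    intro s y hs
    refine (abs_sub _ _).trans ?_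
    have h1 := abs_birkhoff_le hB s y
    have h2 : |(s : ℝ) * α| = s * |α| := by rw [abs_mul, Nat.abs_cast]
    have h3 : (s : ℝ) ≤ m := by exact_mod_cast hs
    have h4 : (s : ℝ) * (B + |α|) ≤ m * (B + |α|) := by gcongr
    rw [h2]
    linarith
  have hm0 : 0 ≤ (m : ℝ) * (B + |α|) := by positivity
  have hNε : 0 ≤ (N : ℝ) * ε := by positivity
  obtain ⟨j, hj, hjV⟩ := concat_phase hm hx
  rcases le_or_gt N j with hNj | hNj
  · have := triv N x (by omega)
    linarith
  · obtain ⟨q, s, hs, e⟩ : ∃ q s : ℕ, s < m ∧ N = j + q * m + s :=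
      ⟨(N - j) / m, (N - j) % m, Nat.mod_lt _ hm, by
        have := Nat.mod_add_div (N - j) m
        rw [mul_comm ((N - j) / m) m]
        omega⟩
    have h1 := triv j x hj.le
    have h2 := triv s ((fullShift A)^[j + q * m] x) hs.le
    have h3 := birkhoff_blocks hS h (iterate_mem hS j (hVS hx)) (fun t => by
      rw [wd_iterate, add_comm]
      exact_mod_cast hjV t) q
    have h4 : ((q * m : ℕ) : ℝ) * ε ≤ N * ε := by
      gcongr
      omega
    rw [e, birkhoffSum_add, birkhoffSum_add]
    rw [← e]
    have e' : (N : ℝ) = j + (q * m : ℕ) + s := by rw [e]; push_cast; ring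
    have e'' : (N : ℝ) * α = j * α + (q * m : ℕ) * α + s * α := by rw [e']; ring
    rw [e'']
    rw [abs_le] at h1 h2 h3 ⊢
    constructor <;> linarith

variable {S : Set (ℤ → A)} {ρ : (ℤ → A) → ℝ} {c : ℝ} {u : List A}
  {W : ℕ → Finset (List A)} {n : ℕ → ℕ}

/-- Since every word of `W (k + 1)` uses every word of `W k` exactly once, Birkhoff averages over
words of `W (k + 1)` are almost constant, hence so are long averages along `concat (W (k + 1))`. -/
lemma Tower.averages (h : Tower S ρ c u W n) (hSc : IsClosed S) (hS : fullShift A '' S = S)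
    (hρ : Continuous ρ) (hpos : ∀ x ∈ S, 0 < ρ x) (hc : 0 < c) (hG : Glues S u.length)
    {f : (ℤ → A) → ℝ} (hf : Continuous f) {ε : ℝ} (hε : 0 < ε) :
    ∀ᶠ k in atTop, ∃ α : ℝ, ∑ w ∈ W k, supSum S f w = n (k + 1) * α ∧
      (∀ x ∈ S, wd x 0 (n (k + 1)) ∈ W (k + 1) →
        |birkhoffSum (fullShift A) f (n (k + 1)) x - n (k + 1) * α| ≤ n (k + 1) * ε) ∧
      ∃ C : ℝ, ∀ x ∈ concat (W (k + 1)) (n (k + 1)), ∀ N : ℕ,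
        |birkhoffSum (fullShift A) f N x - N * α| ≤ N * ε + C := by
  obtain ⟨n₀, hn₀⟩ := birkhoff_osc hf hε
  obtain ⟨B, -, hB⟩ := exists_bound hf
  filter_upwards [(h.tendsto hS hρ hpos hc).eventually_ge_atTop n₀] with k hk
  have hpos' : (0 : ℝ) < n (k + 1) := by exact_mod_cast (h.stage (k + 1)).pos
  set α := (∑ w ∈ W k, supSum S f w) / n (k + 1) with hα
  have e : ∑ w ∈ W k, supSum S f w = n (k + 1) * α := by rw [hα]; field_simp
  have key : ∀ x ∈ S, wd x 0 (n (k + 1)) ∈ W (k + 1) →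
      |birkhoffSum (fullShift A) f (n (k + 1)) x - n (k + 1) * α| ≤ n (k + 1) * ε := by
    intro x hx hxW
    obtain ⟨l, hl, e2⟩ := (h.next k).perm _ hxW
    have hll : l.length = (W k).card := by rw [hl.length_eq, Finset.length_toList]
    have hlen : n (k + 1) = l.length * n k := by rw [h.len, hll]
    have h1 := birkhoff_flatten hS hf (hn₀ (n k) hk) l
      (fun w hw => (h.stage k).len w (Finset.mem_toList.1 (hl.mem_iff.1 hw))) hx
      (by rw [← hlen, e2])
    rw [← hlen, (hl.map _).sum_eq, Finset.sum_map_toList, e] at h1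
    exact h1
  exact ⟨α, e, key, _, fun x hx N => birkhoff_concat hB (h.stage (k + 1)).pos hS
    (h.subset hSc hS hG (k + 1)) hε key hx N⟩

lemma le_of_forall_nat_mul_le {a ε C : ℝ} (h : ∀ N : ℕ, N * a ≤ N * ε + C) : a ≤ ε := by
  by_contra hlt
  push Not at hlt
  obtain ⟨N, hN⟩ := exists_nat_gt (C / (a - ε))
  rw [div_lt_iff₀ (by linarith)] at hN
  have := h N
  linarith

variable [MeasurableSpace (ℤ → A)] [BorelSpace (ℤ → A)]

/-- Birkhoff averages over long words of the tower, and along its limit system, are close to the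
integral against any invariant measure on the limit system. -/
lemma Tower.averages_integral (h : Tower S ρ c u W n) (hSc : IsClosed S) (hS : fullShift A '' S = S)
    (hρ : Continuous ρ) (hpos : ∀ x ∈ S, 0 < ρ x) (hc : 0 < c) (hG : Glues S u.length)
    {ν : Measure (ℤ → A)} [IsProbabilityMeasure ν] (hν : MeasurePreserving (fullShift A) ν ν)
    (hνX : ν (towerSet W n)ᶜ = 0)
    {f : (ℤ → A) → ℝ} (hf : Continuous f) {ε : ℝ} (hε : 0 < ε) :
    ∀ᶠ k in atTop, |∑ w ∈ W k, supSum S f w - n (k + 1) * ∫ x, f x ∂ν| ≤ n (k + 1) * ε ∧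
      (∀ x ∈ S, wd x 0 (n (k + 1)) ∈ W (k + 1) →
        |birkhoffSum (fullShift A) f (n (k + 1)) x - n (k + 1) * ∫ x, f x ∂ν| ≤
          n (k + 1) * ε) ∧
      ∃ C : ℝ, ∀ x ∈ towerSet W n, ∀ N : ℕ,
        |birkhoffSum (fullShift A) f N x - N * ∫ x, f x ∂ν| ≤ N * ε + C := by
  filter_upwards [h.averages hSc hS hρ hpos hc hG hf (half_pos hε)] with k hk
  obtain ⟨α, h1, h2, C, h3⟩ := hk
  set I := ∫ x, f x ∂ν with hI
  have hX : ∀ᵐ x ∂ν, x ∈ towerSet W n := hνX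
  have h4 : |I - α| ≤ ε / 2 := by
    refine le_of_forall_nat_mul_le (C := C) fun N => ?_
    have e : (N : ℝ) * (I - α) = ∫ x, (birkhoffSum (fullShift A) f N x - N * α) ∂ν := by
      rw [integral_sub (integrable_cont ν (continuous_birkhoff hf N)) (integrable_const _),
        integral_birkhoff hν hf]
      simp
      ring
    rw [← Nat.abs_cast N, ← abs_mul, Nat.abs_cast, e, ← Real.norm_eq_abs]
    refine (norm_integral_le_of_norm_le_const (C := N * (ε / 2) + C) ?_).trans (by simp)
    filter_upwards [hX] with x hx
    exact h3 x (mem_iInter.1 hx _) N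
  have h5 : ∀ (N : ℕ) (a D : ℝ), |a - N * α| ≤ N * (ε / 2) + D → |a - N * I| ≤ N * ε + D := by
    intro N a D ha
    have h6 : |(N : ℝ) * I - N * α| ≤ N * (ε / 2) := by
      rw [← mul_sub, abs_mul, Nat.abs_cast]
      gcongr
    rw [abs_le] at *
    constructor <;> linarith
  refine ⟨?_, fun x hx hxW => ?_, C, fun x hx N => h5 _ _ _ (h3 x (mem_iInter.1 hx _) N)⟩
  · have := h5 (n (k + 1)) (∑ w ∈ W k, supSum S f w) 0 (by
      rw [h1]
      simp
      positivity)
    simpa using this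
  · have := h5 (n (k + 1)) _ 0 (by simpa using h2 x hx hxW)
    simpa using this

end Averages

/-! ### Invariant measures and strict ergodicity -/

section Measures

variable {A : Type*} [Fintype A] [MetricSpace A] [MeasurableSpace (ℤ → A)] [BorelSpace (ℤ → A)]

lemma integral_empMeasure {f : (ℤ → A) → ℝ} (hf : Continuous f) (N : ℕ) (x : ℤ → A) :
    ∫ y, f y ∂(empMeasure (fullShift A) N x) = (N : ℝ)⁻¹ * birkhoffSum (fullShift A) f N x := by
  unfold empMeasure birkhoffSum
  rw [integral_smul_measure, integral_finsetSum_measure fun i _ => integrable_cont _ hf]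
  simp [integral_dirac]

lemma isProbabilityMeasure_empMeasure {N : ℕ} (hN : 0 < N) (x : ℤ → A) :
    IsProbabilityMeasure (empMeasure (fullShift A) N x) := by
  constructor
  unfold empMeasure
  simp only [Measure.smul_apply, Measure.finsetSum_apply, measure_univ, Finset.sum_const,
    Finset.card_range, smul_eq_mul, nsmul_eq_mul, mul_one]
  exact ENNReal.inv_mul_cancel (by exact_mod_cast hN.ne') (ENNReal.natCast_ne_top N)

/-- The Krylov–Bogolyubov theorem. -/
lemma exists_invariant {X : Set (ℤ → A)} (hX : IsClosed X) (hne : X.Nonempty)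
    (hinv : ∀ x ∈ X, ∀ i : ℕ, (fullShift A)^[i] x ∈ X) :
    ∃ ν : Measure (ℤ → A), IsProbabilityMeasure ν ∧ MeasurePreserving (fullShift A) ν ν ∧
      ν Xᶜ = 0 := by
  obtain ⟨x, hx⟩ := hne
  let m : ℕ → ProbabilityMeasure (ℤ → A) := fun N =>
    ⟨empMeasure (fullShift A) (N + 1) x, isProbabilityMeasure_empMeasure N.succ_pos x⟩
  obtain ⟨ν, -, hν⟩ := isCompact_univ.ultrafilter_le_nhds ((hyperfilter ℕ).map m) (by simp)
  have hlim : Tendsto m (hyperfilter ℕ) (𝓝 ν) := hν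
  have hle : (hyperfilter ℕ : Filter ℕ) ≤ atTop := by
    rw [← Nat.cofinite_eq_atTop]
    exact hyperfilter_le_cofinite
  have hint := ProbabilityMeasure.tendsto_iff_forall_integral_tendsto.1 hlim
  have hmap : (ν : Measure (ℤ → A)).map (fullShift A) = ν := by
    have : IsProbabilityMeasure ((ν : Measure (ℤ → A)).map (fullShift A)) :=
      Measure.isProbabilityMeasure_map measurable_shift.aemeasurable
    refine ext_of_forall_integral_eq_of_IsFiniteMeasure fun f => ?_
    rw [integral_map measurable_shift.aemeasurable f.continuous.aestronglyMeasurable]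
    let g : BoundedContinuousFunction (ℤ → A) ℝ := f.compContinuous ⟨fullShift A, continuous_shift⟩
    have h1 := (hint g).sub (hint f)
    have h2 : Tendsto (fun N => ∫ y, g y ∂(m N : Measure (ℤ → A)) -
        ∫ y, f y ∂(m N : Measure (ℤ → A))) (hyperfilter ℕ) (𝓝 0) := by
      have h3 : Tendsto (fun N : ℕ => 2 * ‖f‖ * ((N + 1 : ℕ) : ℝ)⁻¹) (hyperfilter ℕ) (𝓝 0) := by
        have := (tendsto_inv_atTop_nhds_zero_nat (𝕜 := ℝ)).comp (tendsto_add_atTop_nat 1)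
        simpa using ((this.mono_left hle).const_mul (2 * ‖f‖))
      refine squeeze_zero_norm (fun N => ?_) h3
      change ‖∫ y, g y ∂(empMeasure (fullShift A) (N + 1) x) -
        ∫ y, f y ∂(empMeasure (fullShift A) (N + 1) x)‖ ≤ _
      rw [integral_empMeasure g.continuous, integral_empMeasure f.continuous, ← mul_sub, norm_mul,
        mul_comm, norm_inv, Real.norm_natCast]
      gcongr
      have h4 : birkhoffSum (fullShift A) g (N + 1) x - birkhoffSum (fullShift A) f (N + 1) x =
          f ((fullShift A)^[N + 1] x) - f x := by
        rw [← birkhoffSum_apply_sub_birkhoffSum (fullShift A) f (N + 1) x]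
        congr 1
        refine Finset.sum_congr rfl fun i _ => ?_
        change f (fullShift A ((fullShift A)^[i] x)) = f ((fullShift A)^[i] (fullShift A x))
        rw [← Function.iterate_succ_apply' (fullShift A) i x, Function.iterate_succ_apply]
      rw [h4]
      refine (norm_sub_le _ _).trans ?_
      have := f.norm_coe_le_norm ((fullShift A)^[N + 1] x)
      have := f.norm_coe_le_norm x
      linarith
    have h5 := tendsto_nhds_unique h1 h2
    have h6 : ∫ y, g y ∂(ν : Measure (ℤ → A)) = ∫ y, f y ∂(ν : Measure (ℤ → A)) := by linarith
    exact h6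
  refine ⟨ν, inferInstance, ⟨measurable_shift, hmap⟩, ?_⟩
  have h1 := ProbabilityMeasure.limsup_measure_closed_le_of_tendsto hlim hX
  have h2 : ∀ N, (m N : Measure (ℤ → A)) X = 1 := by
    intro N
    change empMeasure (fullShift A) (N + 1) x X = 1
    unfold empMeasure
    simp only [Measure.smul_apply, Measure.finsetSum_apply, smul_eq_mul,
      Measure.dirac_apply_of_mem (hinv x hx _), Finset.sum_const, Finset.card_range, nsmul_eq_mul,
      mul_one]
    exact ENNReal.inv_mul_cancel (by simp) (ENNReal.natCast_ne_top _)
  simp only [h2, limsup_const] at h1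
  rw [prob_compl_eq_zero_iff hX.measurableSet]
  exact le_antisymm prob_le_one h1

lemma measSupport_eq (ν : Measure (ℤ → A)) : measSupport ν = ν.support := by
  rw [Measure.support_eq_forall_isOpen]
  ext x
  exact ⟨fun h U hx hU => h U hU hx, fun h U hU hx => h U hx hU⟩

/-- Uniform convergence of Birkhoff averages on `X` to the integral against `ν` forces the
support of `ν` to be strictly ergodic. -/
lemma strictlyErgodic_of_averages {X : Set (ℤ → A)} (hX : IsClosed X) {ν : Measure (ℤ → A)}
    [hp : IsProbabilityMeasure ν] (hν : MeasurePreserving (fullShift A) ν ν) (hνX : ν Xᶜ = 0)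
    (h : ∀ f : (ℤ → A) → ℝ, Continuous f → ∀ ε > 0, ∃ C : ℝ, ∀ x ∈ X, ∀ N : ℕ,
      |birkhoffSum (fullShift A) f N x - N * ∫ x, f x ∂ν| ≤ N * ε + C) :
    StrictlyErgodicOn (fullShift A) (measSupport ν) := by
  rw [measSupport_eq]
  have hsub : ν.support ⊆ X := Measure.support_subset_of_isClosed hX hνX
  refine ⟨?_, ν, ⟨hp, hν, Measure.measure_compl_support⟩, ?_⟩
  · rintro K hK ⟨x, hx⟩ hKc hKi
    refine hK.antisymm fun y hy => ?_
    rw [← hKc.closure_eq, mem_closure_iff]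
    intro U hU hyU
    obtain ⟨r, hr⟩ := exists_window_subset hU hyU
    let w := wd y (-(r : ℤ)) (2 * r + 1)
    let V : Set (ℤ → A) := {z | wd z (-(r : ℤ)) (2 * r + 1) = w}
    have hV : IsClopen V := isClopen_wd _ _ fun v => v = w
    have hVU : V ⊆ U := by
      intro z hz
      have hz' := (wd_eq_wd_iff _ _ _ _ _).1 (show wd z (-(r : ℤ)) (2 * r + 1) = w from hz)
      refine hr z fun i hi => ?_
      rw [abs_le] at hi
      have := hz' (i + r).toNat (by omega)
      rw [Int.toNat_of_nonneg (by omega)] at this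
      simpa using this
    have hVpos : 0 < ν.real V := by
      rw [measureReal_def]
      refine ENNReal.toReal_pos (ne_of_gt ?_) (measure_ne_top _ _)
      exact (Measure.mem_support_iff_forall y).1 hy V (hV.isOpen.mem_nhds rfl)
    by_contra hcon
    have hnot : ∀ i : ℕ, (fullShift A)^[i] x ∉ V := fun i hi =>
      hcon ⟨_, hVU hi, iterate_mem hKi i hx⟩
    let f : (ℤ → A) → ℝ := V.indicator fun _ => 1
    have hf : Continuous f := continuous_const.indicator (by simp [hV.frontier_eq])
    obtain ⟨C, hC⟩ := h f hf (ν.real V / 2) (by positivity)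
    have hfI : ∫ x, f x ∂ν = ν.real V := by
      simp only [f]
      rw [integral_indicator_const _ hV.isOpen.measurableSet]
      simp
    have h0 : ∀ N, birkhoffSum (fullShift A) f N x = 0 := fun N =>
      Finset.sum_eq_zero fun i _ => indicator_of_notMem (hnot i) _
    have := le_of_forall_nat_mul_le (a := ν.real V) (ε := ν.real V / 2) (C := C) fun N => by
      have := hC x (hsub (hK hx)) N
      rw [hfI, h0, zero_sub, abs_neg, abs_of_nonneg (by positivity)] at this
      exact this
    linarith
  · rintro l ⟨hlp, hl, hlY⟩
    refine ext_of_forall_integral_eq_of_IsFiniteMeasure fun f => ?_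
    have hlX : ∀ᵐ x ∂l, x ∈ X := by
      have : ∀ᵐ x ∂l, x ∈ ν.support := hlY
      exact this.mono fun x hx => hsub hx
    refine eq_of_abs_sub_le_all fun ε hε => ?_
    obtain ⟨C, hC⟩ := h f f.continuous ε hε
    refine le_of_forall_nat_mul_le (C := C) fun N => ?_
    have e : (N : ℝ) * (∫ x, f x ∂l - ∫ x, f x ∂ν) =
        ∫ x, (birkhoffSum (fullShift A) f N x - N * ∫ x, f x ∂ν) ∂l := by
      rw [integral_sub (integrable_cont l (continuous_birkhoff f.continuous N))
        (integrable_const _), integral_birkhoff hl f.continuous]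
      simp
      ring
    rw [← Nat.abs_cast N, ← abs_mul, Nat.abs_cast, e, ← Real.norm_eq_abs]
    refine (norm_integral_le_of_norm_le_const (C := N * ε + C) ?_).trans (by simp)
    filter_upwards [hlX] with x hx
    exact hC x hx N

end Measures

/-! ### Entropy of the limit measure: upper bound -/

section Upper

variable {A : Type*} [Fintype A] [MetricSpace A]

lemma wd_drop_take (x : ℤ → A) (i : ℤ) (d N M : ℕ) (h : d + N ≤ M) :
    wd x (i + d) N = ((wd x i M).drop d).take N := by
  apply List.ext_getElem
  · simp
    omega
  · intro j h1 h2
    simp only [wd, List.getElem_map, List.getElem_range, List.getElem_take, List.getElem_drop]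
    congr 1
    push_cast
    ring

/-- The words of length `N` occurring in free concatenations of words of `W` are determined by
a phase and by the at most `N / n + 2` words of `W` which they meet. -/
lemma exists_word_count {W : Finset (List A)} {n : ℕ} (hn : 0 < n) (N : ℕ) :
    ∃ 𝓑 : Finset (List A), (∀ x ∈ concat W n, wd x 0 N ∈ 𝓑) ∧
      𝓑.card ≤ n * W.card ^ (N / n + 2) := by
  classical
  set M := N / n + 2 with hM
  let F : Fin n × (Fin M → {w // w ∈ W}) → List A := fun p =>
    (((List.ofFn fun t => (p.2 t).1).flatten).drop (n - p.1)).take N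
  refine ⟨Finset.univ.image F, fun x hx => ?_, ?_⟩
  · obtain ⟨j, hj, hjx⟩ := concat_phase hn hx
    rw [Finset.mem_image]
    have hW : ∀ t : ℕ, wd x ((j : ℤ) - n + t * n) n ∈ W := by
      intro t
      have := hjx (t - 1)
      rwa [show (j : ℤ) + (t - 1) * n = (j : ℤ) - n + t * n by ring] at this
    refine ⟨(⟨j, hj⟩, fun t => ⟨_, hW t⟩), Finset.mem_univ _, ?_⟩
    have e1 : (List.ofFn fun t : Fin M => wd x ((j : ℤ) - n + (t : ℕ) * n) n).flatten =
        wd x ((j : ℤ) - n) (M * n) := by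
      rw [wd_blocks, List.ofFn_eq_map]
      congr 1
      rw [← List.map_coe_finRange_eq_range, List.map_map]
      rfl
    have h1 : n * (N / n) + N % n = N := Nat.div_add_mod N n
    have h2 : N % n < n := Nat.mod_lt _ hn
    have h3 : M * n = n * (N / n) + 2 * n := by rw [hM]; ring
    have e2 := wd_drop_take x ((j : ℤ) - n) (n - j) N (M * n) (by omega)
    have e3 : (j : ℤ) - n + ((n - j : ℕ) : ℤ) = 0 := by omega
    rw [e3] at e2
    change ((List.ofFn fun t : Fin M => wd x ((j : ℤ) - n + (t : ℕ) * n) n).flatten.drop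
      (n - j)).take N = wd x 0 N
    rw [e1, e2]
  · refine Finset.card_image_le.trans ?_
    simp

variable [MeasurableSpace (ℤ → A)] [BorelSpace (ℤ → A)]
variable {S : Set (ℤ → A)} {ρ : (ℤ → A) → ℝ} {c : ℝ} {u : List A} {W : ℕ → Finset (List A)}
  {n : ℕ → ℕ}

/-- The growth rate of the tower is `c ∫ ρ dν`. -/
lemma Tower.log_card (h : Tower S ρ c u W n) (hSc : IsClosed S) (hS : fullShift A '' S = S)
    (hρ : Continuous ρ) (hpos : ∀ x ∈ S, 0 < ρ x) (hc : 0 < c) (hG : Glues S u.length)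
    {ν : Measure (ℤ → A)} [IsProbabilityMeasure ν] (hν : MeasurePreserving (fullShift A) ν ν)
    (hνX : ν (towerSet W n)ᶜ = 0) {ε : ℝ} (hε : 0 < ε) :
    ∀ᶠ k in atTop, |Real.log (W (k + 1)).card - n (k + 1) * (c * ∫ x, ρ x ∂ν)| ≤
      n (k + 1) * ε := by
  have ht : Tendsto (fun k => (n (k + 1) : ℝ)) atTop atTop :=
    tendsto_natCast_atTop_atTop.comp ((h.tendsto hS hρ hpos hc).comp (tendsto_add_atTop_nat 1))
  filter_upwards [h.averages_integral hSc hS hρ hpos hc hG hν hνX hρ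
    (show 0 < ε / (2 * c) by positivity), ht.eventually_ge_atTop (3 / (ε / 2))] with k hk hk2
  have h1 := hk.1
  have h2 := (h.next k).lower
  have h3 := (h.next k).upper
  rw [div_le_iff₀ (by positivity)] at hk2
  set s := ∑ w ∈ W k, supSum S ρ w
  set I := ∫ x, ρ x ∂ν
  have h4 : |c * s - n (k + 1) * (c * I)| ≤ n (k + 1) * (ε / 2) := by
    have e : c * s - n (k + 1) * (c * I) = c * (s - n (k + 1) * I) := by ring
    rw [e, abs_mul, abs_of_pos hc]
    refine (mul_le_mul_of_nonneg_left h1 hc.le).trans (le_of_eq ?_)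
    field_simp
  rw [abs_le] at h4 ⊢
  constructor <;> linarith

/-- Words of the limit system are concatenations of words of the `k`-th family, whose number
bounds the entropy of every partition. -/
lemma Tower.refinedInfo_le (h : Tower S ρ c u W n) (hSc : IsClosed S) (hS : fullShift A '' S = S)
    (hρ : Continuous ρ) (hpos : ∀ x ∈ S, 0 < ρ x) (hc : 0 < c) (hG : Glues S u.length)
    {ν : Measure (ℤ → A)} [IsProbabilityMeasure ν] (hν : MeasurePreserving (fullShift A) ν ν)
    (hνX : ν (towerSet W n)ᶜ = 0) {P : Finset (Set (ℤ → A))} (hP : IsMeasPartition P)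
    {ε : ℝ} (hε : 0 < ε) :
    ∀ᶠ N : ℕ in atTop, refinedInfo (fullShift A) ν P N / N ≤ c * ∫ x, ρ x ∂ν + ε := by
  obtain ⟨k, hk⟩ := (h.log_card hSc hS hρ hpos hc hG hν hνX
    (show 0 < ε / 3 by positivity)).exists
  set I := c * ∫ x, ρ x ∂ν
  obtain ⟨r, hr⟩ := EF.refinedInfo_le ν hν hP (show 0 < ε / 3 by positivity)
  have hn := (h.stage (k + 1)).pos
  set m := n (k + 1) with hm
  set V := W (k + 1) with hV
  have hV1 : 0 < V.card := (h.stage (k + 1)).nonempty.card_pos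
  have hlV : 0 ≤ Real.log V.card := Real.log_natCast_nonneg _
  set D : ℝ := Real.log m + (2 * r / m + 2) * Real.log V.card with hD
  filter_upwards [tendsto_natCast_atTop_atTop.eventually_ge_atTop (D / (ε / 3)),
    eventually_gt_atTop 0] with N hN hN0
  obtain ⟨𝓑, hB, hBc⟩ := exists_word_count (W := V) hn (N + 2 * r)
  have hX : ∀ᵐ x ∂ν, x ∈ towerSet W n := hνX
  have hBX : ∀ᵐ x ∂ν, wd x 0 (N + 2 * r) ∈ 𝓑 := by
    filter_upwards [hX] with x hx
    exact hB x (mem_iInter.1 hx (k + 1))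
  have hBne : 0 < 𝓑.card := by
    obtain ⟨x, hx⟩ := hBX.exists
    exact Finset.card_pos.2 ⟨_, hx⟩
  have hBr : (0 : ℝ) < 𝓑.card := by exact_mod_cast hBne
  have h1 := hr N 𝓑 (fun _ => (𝓑.card : ℝ)⁻¹) hBX (fun _ _ => by positivity) (by
    rw [Finset.sum_const, nsmul_eq_mul]
    exact (mul_inv_cancel₀ hBr.ne').le)
  simp only [Real.log_inv, neg_neg, integral_const, probReal_univ, one_smul] at h1
  have hmr : (0 : ℝ) < m := by exact_mod_cast hn
  have hVr : (0 : ℝ) < V.card := by exact_mod_cast hV1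
  have h2 : Real.log 𝓑.card ≤ Real.log m + ((N + 2 * r : ℕ) / m + 2) * Real.log V.card := by
    have h3 : Real.log 𝓑.card ≤ Real.log (m * V.card ^ ((N + 2 * r) / m + 2)) :=
      Real.log_le_log hBr (by exact_mod_cast hBc)
    rw [Real.log_mul hmr.ne' (by positivity), Real.log_pow] at h3
    refine h3.trans ?_
    gcongr
    push_cast
    gcongr
    exact_mod_cast Nat.cast_div_le (α := ℝ) (m := N + 2 * r) (n := m)
  have hNr : (0 : ℝ) < N := by exact_mod_cast hN0
  rw [div_le_iff₀ (by positivity)] at hN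
  rw [div_le_iff₀ hNr]
  have h4 : Real.log V.card / m ≤ I + ε / 3 := by
    rw [div_le_iff₀ hmr]
    have := (abs_le.1 hk).2
    linarith
  have h5 := mul_le_mul_of_nonneg_left h4 hNr.le
  have h6 : Real.log m + ((N + 2 * r : ℕ) / m + 2) * Real.log V.card =
      D + N * (Real.log V.card / m) := by
    rw [hD]
    push_cast
    field_simp
    ring
  rw [h6] at h2
  linarith

end Upper

/-! ### Entropy of the limit measure: lower bound -/

section Lower

variable {A : Type*} [Fintype A] [MetricSpace A]

lemma sum_words_add (a b : ℕ) (F G : List A → ℝ) :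
    ∑ w ∈ words A (a + b), F (w.take a) * G (w.drop a) =
      (∑ w ∈ words A a, F w) * ∑ w ∈ words A b, G w := by
  rw [Finset.sum_mul_sum, ← Finset.sum_product']
  refine Finset.sum_nbij' (fun w => (w.take a, w.drop a)) (fun p => p.1 ++ p.2) ?_ ?_ ?_ ?_ ?_
  · intro w hw
    rw [mem_words] at hw
    simp [hw]
  · rintro ⟨v, w⟩ h
    simp only [Finset.mem_product, mem_words] at h
    simp [h]
  · intro w _
    simp
  · rintro ⟨v, w⟩ h
    simp only [Finset.mem_product, mem_words] at h
    simp [← h.1]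
  · intro w _
    rfl

/-- The product of the weights `π` of the first `m` consecutive blocks of length `q` of a word. -/
noncomputable def blockWt (π : List A → ℝ) (q : ℕ) : ℕ → List A → ℝ
  | 0, _ => 1
  | m + 1, w => π (w.take q) * blockWt π q m (w.drop q)

lemma sum_blockWt (π : List A → ℝ) (q m s : ℕ) :
    ∑ w ∈ words A (m * q + s), blockWt π q m w =
      (∑ w ∈ words A q, π w) ^ m * (words A s).card := by
  induction m with
  | zero => simp [blockWt]
  | succ m ih =>
    have e : (m + 1) * q + s = q + (m * q + s) := by ring
    rw [e]
    simp only [blockWt]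
    rw [sum_words_add, ih]
    ring

lemma card_words_add (a b : ℕ) :
    ((words A (a + b)).card : ℝ) = (words A a).card * (words A b).card := by
  have := sum_words_add (A := A) a b (fun _ => 1) (fun _ => 1)
  simpa using this

lemma blockWt_wd (π : List A → ℝ) (q m s : ℕ) (x : ℤ → A) (i : ℤ) :
    blockWt π q m (wd x i (m * q + s)) = ∏ t ∈ Finset.range m, π (wd x (i + (t * q : ℕ)) q) := by
  induction m generalizing i with
  | zero => simp [blockWt]
  | succ m ih =>
    have e : (m + 1) * q + s = q + (m * q + s) := by ring
    rw [e, wd_add, blockWt, Finset.prod_range_succ']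
    have h1 : (wd x i q ++ wd x (i + q) (m * q + s)).take q = wd x i q := by simp
    have h2 : (wd x i q ++ wd x (i + q) (m * q + s)).drop q = wd x (i + q) (m * q + s) := by simp
    rw [h1, h2, ih, mul_comm]
    congr 1
    · refine Finset.prod_congr rfl fun t _ => ?_
      congr 2
      push_cast
      ring
    · simp

lemma birkhoffSum_mul {X : Type*} (g : X → X) (f : X → ℝ) (m q : ℕ) (x : X) :
    birkhoffSum g f (m * q) x =
      ∑ j ∈ Finset.range q, ∑ t ∈ Finset.range m, f (g^[j + t * q] x) := by
  induction m with
  | zero => simp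
  | succ m ih =>
    rw [Nat.succ_mul, birkhoffSum_add, ih]
    simp only [Finset.sum_range_succ, Finset.sum_add_distrib]
    congr 1
    refine Finset.sum_congr rfl fun j _ => ?_
    rw [← Function.iterate_add_apply]

/-- Kraft's inequality: few words have a short code. The code of a word of length `N` is obtained
by cutting it into blocks of length `q`, after the best of the `q` possible offsets, and spending
`-log π` on each block; averaging over offsets relates its length to a Birkhoff sum. -/
lemma log_card_le {q N : ℕ} (hq : 0 < q) {π : List A → ℝ} (hπ0 : ∀ w ∈ words A q, 0 < π w)
    (hπ1 : ∑ w ∈ words A q, π w ≤ 1) {V : Finset (List A)} (hV : V.Nonempty) {T : ℝ}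
    (h : ∀ w ∈ V, ∃ x : ℤ → A, wd x 0 N = w ∧
      birkhoffSum (fullShift A) (fun x => -Real.log (π (wd x 0 q))) N x ≤ q * T) :
    Real.log V.card ≤ T + Real.log (q * (words A q).card) := by
  classical
  set f : (ℤ → A) → ℝ := fun x => -Real.log (π (wd x 0 q)) with hf
  have hle : ∀ w ∈ words A q, π w ≤ 1 := fun w hw =>
    (Finset.single_le_sum (fun v hv => (hπ0 v hv).le) hw).trans hπ1
  have hf0 : ∀ x, 0 ≤ f x := fun x => neg_nonneg.2
    (Real.log_nonpos (hπ0 _ (by simp)).le (hle _ (by simp)))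
  have : Nonempty (ℤ → A) := by
    obtain ⟨w, hw⟩ := hV
    exact ⟨(h w hw).choose⟩
  choose! ξ hξ hξT using h
  set m := N / q with hm
  have hmN : m * q ≤ N := Nat.div_mul_le_self N q
  have hNm : N ≤ m * q + q := by
    have h1 := Nat.div_add_mod N q
    have h2 := Nat.mod_lt N hq
    rw [← hm, mul_comm] at h1
    omega
  set L := m * q + q with hL
  let G : List A → List A := fun w => wd (ξ w) 0 L
  have hGinj : Set.InjOn G V := by
    intro w hw w' hw' e
    rw [← hξ w hw, ← hξ w' hw']
    refine wd_congr fun j hj => ?_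
    exact (wd_eq_wd_iff _ _ _ _ _).1 e j (hj.trans_le hNm)
  have hprod : ∀ (x : ℤ → A) (j : ℕ), j < q → blockWt π q m ((wd x 0 L).drop j) =
      Real.exp (-∑ t ∈ Finset.range m, f ((fullShift A)^[j + t * q] x)) := by
    intro x j hj
    have e : L = j + (m * q + (q - j)) := by omega
    rw [e, wd_add]
    have e2 : (wd x 0 j ++ wd x (0 + j) (m * q + (q - j))).drop j =
      wd x (0 + j) (m * q + (q - j)) := by simp
    rw [e2, blockWt_wd, ← Finset.sum_neg_distrib, Real.exp_sum]
    refine Finset.prod_congr rfl fun t _ => ?_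
    simp only [hf, neg_neg]
    rw [Real.exp_log (hπ0 _ (by simp)), wd_iterate]
    congr 2
    push_cast
    ring
  have hone : ∀ w ∈ V, 1 ≤ Real.exp T * ∑ j ∈ Finset.range q, blockWt π q m ((G w).drop j) := by
    intro w hw
    have h1 : birkhoffSum (fullShift A) f (m * q) (ξ w) ≤ q * T := by
      refine le_trans ?_ (hξT w hw)
      exact Finset.sum_le_sum_of_subset_of_nonneg (Finset.range_mono hmN) fun _ _ _ => hf0 _
    rw [birkhoffSum_mul] at h1
    obtain ⟨j, hj, hjT⟩ : ∃ j ∈ Finset.range q,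
        ∑ t ∈ Finset.range m, f ((fullShift A)^[j + t * q] (ξ w)) ≤ T := by
      by_contra hcon
      push Not at hcon
      have := Finset.sum_lt_sum_of_nonempty (Finset.nonempty_range_iff.2 hq.ne') hcon
      rw [Finset.sum_const, Finset.card_range, nsmul_eq_mul] at this
      linarith
    have h2 : Real.exp (-T) ≤ blockWt π q m ((G w).drop j) := by
      rw [hprod _ _ (Finset.mem_range.1 hj)]
      gcongr
    have h3 : blockWt π q m ((G w).drop j) ≤
        ∑ j ∈ Finset.range q, blockWt π q m ((G w).drop j) :=
      Finset.single_le_sum (f := fun j => blockWt π q m ((G w).drop j)) (fun i hi => by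
        change 0 ≤ blockWt π q m ((G w).drop i)
        rw [hprod _ _ (Finset.mem_range.1 hi)]
        positivity) hj
    calc 1 = Real.exp T * Real.exp (-T) := by rw [← Real.exp_add]; simp
      _ ≤ _ := by gcongr; exact h2.trans h3
  have hnonneg : ∀ w ∈ words A L, ∀ j < q, 0 ≤ blockWt π q m (w.drop j) := by
    intro w hw j hj
    have hA : Nonempty A := by
      rw [mem_words] at hw
      have : 0 < w.length := by omega
      exact ⟨w[0]⟩
    obtain ⟨x, hx⟩ := exists_wd_eq w
    rw [mem_words.1 hw] at hx
    rw [← hx, hprod _ _ hj]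
    positivity
  have hsum : ∀ j < q, ∑ w ∈ words A L, blockWt π q m (w.drop j) ≤ (words A q).card := by
    intro j hj
    have e : L = j + (m * q + (q - j)) := by omega
    rw [e]
    have h1 := sum_words_add (A := A) j (m * q + (q - j)) (fun _ => 1) (blockWt π q m)
    simp only [one_mul, Finset.sum_const, nsmul_eq_mul, mul_one] at h1
    rw [h1, sum_blockWt]
    have h2 := card_words_add (A := A) j (q - j)
    rw [Nat.add_sub_cancel' hj.le] at h2
    rw [h2]
    have h3 : (∑ w ∈ words A q, π w) ^ m ≤ 1 :=
      pow_le_one₀ (Finset.sum_nonneg fun w hw => (hπ0 w hw).le) hπ1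
    gcongr
    exact mul_le_of_le_one_left (by positivity) h3
  have hfinal : (V.card : ℝ) ≤ Real.exp T * (q * (words A q).card) := by
    calc (V.card : ℝ) = ∑ w ∈ V, (1 : ℝ) := by simp
      _ ≤ ∑ w ∈ V, Real.exp T * ∑ j ∈ Finset.range q, blockWt π q m ((G w).drop j) :=
        Finset.sum_le_sum hone
      _ = Real.exp T * ∑ w ∈ V.image G, ∑ j ∈ Finset.range q, blockWt π q m (w.drop j) := by
        rw [Finset.sum_image hGinj, Finset.mul_sum]
      _ ≤ Real.exp T * ∑ w ∈ words A L, ∑ j ∈ Finset.range q, blockWt π q m (w.drop j) := by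
        refine mul_le_mul_of_nonneg_left ?_ (Real.exp_pos T).le
        refine Finset.sum_le_sum_of_subset_of_nonneg ?_ fun w hw _ =>
          Finset.sum_nonneg fun j hj => hnonneg w hw j (Finset.mem_range.1 hj)
        intro w hw
        obtain ⟨v, -, rfl⟩ := Finset.mem_image.1 hw
        simp [G]
      _ = Real.exp T * ∑ j ∈ Finset.range q, ∑ w ∈ words A L, blockWt π q m (w.drop j) := by
        rw [Finset.sum_comm]
      _ ≤ Real.exp T * ∑ j ∈ Finset.range q, ((words A q).card : ℝ) := by
        gcongr with j hj
        exact hsum j (Finset.mem_range.1 hj)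
      _ = _ := by simp
  have hVpos : (0 : ℝ) < V.card := by exact_mod_cast hV.card_pos
  have hpos : (0 : ℝ) < q * (words A q).card :=
    pos_of_mul_pos_right (hVpos.trans_le hfinal) (Real.exp_pos T).le
  calc Real.log V.card ≤ Real.log (Real.exp T * (q * (words A q).card)) :=
        Real.log_le_log hVpos hfinal
    _ = _ := by rw [Real.log_mul (Real.exp_pos T).ne' hpos.ne', Real.log_exp]

lemma wd_eq_ofFn (x : ℤ → A) (q : ℕ) : wd x 0 q = List.ofFn fun i : Fin q => x (i : ℕ) := by
  apply List.ext_getElem (by simp)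
  intro j h1 h2
  simp [wd]

lemma sum_words_eq (q : ℕ) (F : List A → ℝ) :
    ∑ w ∈ words A q, F w = ∑ v : Fin q → A, F (List.ofFn v) := by
  symm
  refine Finset.sum_bij (fun v _ => List.ofFn v) (fun v _ => by simp)
    (fun v _ v' _ e => List.ofFn_injective e) (fun w hw => ?_) fun _ _ => rfl
  rw [mem_words] at hw
  subst hw
  exact ⟨w.get, Finset.mem_univ _, List.ofFn_get w⟩

open Classical in
/-- The partition according to the symbol at the origin. -/
noncomputable def cylPart (A : Type*) [Fintype A] : Finset (Set (ℤ → A)) :=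
  Finset.univ.image fun a : A => {x : ℤ → A | x 0 = a}

variable [MeasurableSpace (ℤ → A)] [BorelSpace (ℤ → A)]

lemma isMeasPartition_cylPart : IsMeasPartition (cylPart A) := by
  classical
  refine ⟨?_, ?_, ?_⟩
  · intro p hp
    obtain ⟨a, -, rfl⟩ := Finset.mem_image.1 hp
    exact (isClosed_singleton.preimage (continuous_apply (0 : ℤ))).measurableSet
  · refine eq_univ_of_forall fun x => ⟨{y | y 0 = x 0}, ?_, rfl⟩
    exact Finset.mem_coe.2 (Finset.mem_image.2 ⟨x 0, Finset.mem_univ _, rfl⟩)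
  · intro p hp p' hp' hne
    obtain ⟨a, -, rfl⟩ := Finset.mem_image.1 (Finset.mem_coe.1 hp)
    obtain ⟨b, -, rfl⟩ := Finset.mem_image.1 (Finset.mem_coe.1 hp')
    refine Set.disjoint_left.2 fun x hx hx' => hne ?_
    have h1 : x 0 = a := hx
    have h2 : x 0 = b := hx'
    rw [← h1, ← h2]

lemma refinedInfo_cylPart (ν : Measure (ℤ → A)) (q : ℕ) :
    refinedInfo (fullShift A) ν (cylPart A) q =
      ∑ v : Fin q → A, negMulLog (ν.real {x | wd x 0 q = List.ofFn v}) := by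
  classical
  let g : A → {p // p ∈ cylPart A} := fun a =>
    ⟨{x | x 0 = a}, Finset.mem_image.2 ⟨a, Finset.mem_univ _, rfl⟩⟩
  have hg : Function.Bijective g := by
    constructor
    · intro a b hab
      have h1 : {x : ℤ → A | x 0 = a} = {x | x 0 = b} := congrArg Subtype.val hab
      have h2 : (fun _ : ℤ => a) ∈ {x : ℤ → A | x 0 = a} := rfl
      rw [h1] at h2
      exact h2
    · rintro ⟨p, hp⟩
      obtain ⟨a, -, rfl⟩ := Finset.mem_image.1 hp
      exact ⟨a, rfl⟩
  symm
  refine Fintype.sum_equiv ((Equiv.refl (Fin q)).arrowCongr (Equiv.ofBijective g hg)) _ _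
    fun v => ?_
  unfold Measure.real
  congr 3
  ext x
  simp only [mem_ofPred_eq, mem_iInter, mem_preimage]
  rw [wd_eq_ofFn, List.ofFn_inj, funext_iff]
  refine forall_congr' fun i => ?_
  change x (i : ℕ) = v i ↔ (fullShift A)^[(i : ℕ)] x 0 = v i
  rw [iterate_shift, zero_add]

lemma integral_wd (ν : Measure (ℤ → A)) [IsProbabilityMeasure ν] (q : ℕ) (h : List A → ℝ) :
    ∫ x, h (wd x 0 q) ∂ν =
      ∑ v : Fin q → A, ν.real {x | wd x 0 q = List.ofFn v} * h (List.ofFn v) := by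
  have e : ∀ v : Fin q → A, (fun (x : ℤ → A) (i : Fin q) => x (i : ℕ)) ⁻¹' {v} =
      {x | wd x 0 q = List.ofFn v} := by
    intro v
    ext x
    simp only [mem_preimage, mem_singleton_iff, mem_ofPred_eq]
    rw [wd_eq_ofFn, List.ofFn_inj]
  have := (integrable_fintype_comp ν (fun (x : ℤ → A) (i : Fin q) => x (i : ℕ))
    (fun v => by
      rw [e]
      exact measurableSet_wd 0 q fun w => w = List.ofFn v) fun v => h (List.ofFn v)).2
  simp only [e] at this
  rw [← this]
  refine integral_congr_ae (Eventually.of_forall fun x => ?_)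
  change h (wd x 0 q) = h (List.ofFn fun i : Fin q => x (i : ℕ))
  rw [wd_eq_ofFn]

variable {S : Set (ℤ → A)} {ρ : (ℤ → A) → ℝ} {c : ℝ} {u : List A} {W : ℕ → Finset (List A)}
  {n : ℕ → ℕ}

/-- If the entropy of `q`-blocks were smaller, coding them by their frequencies would compress
the words of the tower below the logarithm of their number. -/
lemma Tower.le_refinedInfo (h : Tower S ρ c u W n) (hSc : IsClosed S) (hS : fullShift A '' S = S)
    (hρ : Continuous ρ) (hpos : ∀ x ∈ S, 0 < ρ x) (hc : 0 < c) (hG : Glues S u.length)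
    {ν : Measure (ℤ → A)} [IsProbabilityMeasure ν] (hν : MeasurePreserving (fullShift A) ν ν)
    (hνX : ν (towerSet W n)ᶜ = 0) {q : ℕ} (hq : 0 < q) :
    q * (c * ∫ x, ρ x ∂ν) ≤ refinedInfo (fullShift A) ν (cylPart A) q := by
  set I := c * ∫ x, ρ x ∂ν
  set R := refinedInfo (fullShift A) ν (cylPart A) q with hR
  have hqr : (0 : ℝ) < q := by exact_mod_cast hq
  refine le_of_forall_pos_le_add fun ε' hε' => ?_
  obtain ⟨ε, hε, hεq⟩ : ∃ ε : ℝ, 0 < ε ∧ 2 * ε + 2 * q * ε = ε' :=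
    ⟨ε' / (2 + 2 * q), by positivity, by field_simp⟩
  set K : ℝ := ((words A q).card : ℝ) with hK
  have hK0 : 0 < K := by
    obtain ⟨x⟩ := Measure.nonempty_of_neZero ν
    rw [hK]
    exact_mod_cast Finset.card_pos.2 ⟨wd x 0 q, by simp⟩
  -- the frequencies are perturbed by `η` to keep their logarithms finite
  set η := ε / K with hη
  have hη0 : 0 < η := by positivity
  have hηK : η * K = ε := by rw [hη]; field_simp
  set p : List A → ℝ := fun w => ν.real {x | wd x 0 q = w} with hp
  have hp0 : ∀ w, 0 ≤ p w := fun w => measureReal_nonneg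
  have hp1 : ∑ v : Fin q → A, p (List.ofFn v) = 1 := by
    have := integral_wd ν q fun _ => 1
    simpa using this.symm
  set π : List A → ℝ := fun w => (p w + η) / (1 + ε) with hπ
  have hε1 : 0 < 1 + ε := by positivity
  have hπ0 : ∀ w, 0 < π w := fun w => div_pos (add_pos_of_nonneg_of_pos (hp0 w) hη0) hε1
  have hπ1 : ∑ w ∈ words A q, π w ≤ 1 := by
    rw [← Finset.sum_div, Finset.sum_add_distrib, sum_words_eq, hp1, Finset.sum_const,
      nsmul_eq_mul, ← hK, mul_comm, hηK, div_self hε1.ne']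
  set f : (ℤ → A) → ℝ := fun x => -Real.log (π (wd x 0 q)) with hf
  have hfc : Continuous f := continuous_wd_comp 0 q fun w => -Real.log (π w)
  have hfR : ∫ x, f x ∂ν ≤ R + ε := by
    rw [hR, refinedInfo_cylPart, hf, integral_wd ν q fun w => -Real.log (π w)]
    calc ∑ v : Fin q → A, p (List.ofFn v) * -Real.log (π (List.ofFn v))
        ≤ ∑ v : Fin q → A, (negMulLog (p (List.ofFn v)) + p (List.ofFn v) * ε) := by
          refine Finset.sum_le_sum fun v _ => ?_
          set a := p (List.ofFn v) with ha
          have ha0 : 0 ≤ a := hp0 _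
          change a * -Real.log ((a + η) / (1 + ε)) ≤ -(a * Real.log a) + a * ε
          rcases ha0.eq_or_lt with h0 | h0
          · rw [← h0]
            simp
          · rw [Real.log_div (by positivity) hε1.ne']
            have h1 : Real.log a ≤ Real.log (a + η) := Real.log_le_log h0 (by linarith)
            have h2 := Real.log_le_sub_one_of_pos hε1
            have h3 : a * (Real.log a + Real.log (1 + ε)) ≤ a * (Real.log (a + η) + ε) :=
              mul_le_mul_of_nonneg_left (by linarith) ha0
            linarith
      _ = _ := by rw [Finset.sum_add_distrib, ← Finset.sum_mul, hp1, one_mul]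
  have ht : Tendsto (fun k => (n (k + 1) : ℝ)) atTop atTop :=
    tendsto_natCast_atTop_atTop.comp ((h.tendsto hS hρ hpos hc).comp (tendsto_add_atTop_nat 1))
  obtain ⟨k, hk1, hk2, hk3⟩ := ((h.log_card hSc hS hρ hpos hc hG hν hνX hε).and
    ((h.averages_integral hSc hS hρ hpos hc hG hν hνX hfc hε).and
      (ht.eventually_ge_atTop (Real.log (q * K) / ε)))).exists
  rw [div_le_iff₀ hε] at hk3
  have hst := h.stage (k + 1)
  have hN : (0 : ℝ) < n (k + 1) := by exact_mod_cast hst.pos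
  have h1 := log_card_le (N := n (k + 1)) hq (fun w _ => hπ0 w) hπ1 hst.nonempty
    (T := n (k + 1) * (∫ x, f x ∂ν + ε) / q) (fun w hw => by
      obtain ⟨x, hxS, hxw⟩ := (hst.loop w hw).occurs
      rw [hst.len w hw] at hxw
      refine ⟨x, hxw, ?_⟩
      have := (abs_le.1 (hk2.2.1 x hxS (by rwa [hxw]))).2
      rw [mul_div_cancel₀ _ hqr.ne']
      linarith)
  have h2 := (abs_le.1 hk1).1
  have h3 : (n (k + 1) : ℝ) * (q * I) ≤ n (k + 1) * (∫ x, f x ∂ν + ε + 2 * q * ε) := by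
    have h4 : n (k + 1) * I - 2 * (n (k + 1) * ε) ≤ n (k + 1) * (∫ x, f x ∂ν + ε) / q := by
      linarith
    rw [le_div_iff₀ hqr] at h4
    linarith
  have h5 := le_of_mul_le_mul_left h3 hN
  linarith

/-- The entropy of the limit measure. -/
lemma Tower.measEntropy_eq (h : Tower S ρ c u W n) (hSc : IsClosed S) (hS : fullShift A '' S = S)
    (hρ : Continuous ρ) (hpos : ∀ x ∈ S, 0 < ρ x) (hc : 0 < c) (hG : Glues S u.length)
    {ν : Measure (ℤ → A)} [IsProbabilityMeasure ν] (hν : MeasurePreserving (fullShift A) ν ν)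
    (hνX : ν (towerSet W n)ᶜ = 0) :
    measEntropy (fullShift A) ν = ((c * ∫ x, ρ x ∂ν : ℝ) : EReal) := by
  have h0 : ∀ (P : Finset (Set (ℤ → A))) (N : ℕ), 0 ≤ refinedInfo (fullShift A) ν P N / N :=
    fun P N => div_nonneg (refinedInfo_nonneg _ _ _ _) (Nat.cast_nonneg N)
  apply le_antisymm
  · refine iSup₂_le fun P hP => EReal.coe_le_coe_iff.2 ?_
    refine le_of_forall_pos_le_add fun ε hε => ?_
    exact limsup_le_of_le (isCoboundedUnder_le_of_le _ (h0 P))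
      (h.refinedInfo_le hSc hS hρ hpos hc hG hν hνX hP hε)
  · refine le_iSup₂_of_le (cylPart A) isMeasPartition_cylPart (EReal.coe_le_coe_iff.2 ?_)
    refine le_limsup_of_frequently_le (Eventually.frequently ?_)
      ⟨_, eventually_map.2 (h.refinedInfo_le hSc hS hρ hpos hc hG hν hνX
        isMeasPartition_cylPart one_pos)⟩
    filter_upwards [eventually_gt_atTop 0] with q hq
    have hqr : (0 : ℝ) < q := by exact_mod_cast hq
    rw [le_div_iff₀ hqr, mul_comm]
    exact h.le_refinedInfo hSc hS hρ hpos hc hG hν hνX hq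

end Lower

end EF

/-- For a shift of finite type `S`, an invariant measure `μ` of
positive entropy and a positive continuous roof function `ρ`, every
`c ∈ (0, h_μ(σ)/∫ρ dμ)` is realized as `h_ν(σ) = c·∫ρ dν` for an invariant
measure `ν` whose support is a strictly ergodic subsystem. -/
theorem SFT_intermediate_abramov_value
    {A : Type*} [Fintype A] [MetricSpace A]
    [MeasurableSpace (ℤ → A)] [BorelSpace (ℤ → A)]
    (S : Set (ℤ → A)) (hSFT : IsSFT S)
    (μ : MeasureTheory.Measure (ℤ → A)) (hμp : MeasureTheory.IsProbabilityMeasure μ)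
    (hμi : MeasureTheory.MeasurePreserving (fullShift A) μ μ) (hμS : μ Sᶜ = 0)
    (hent : 0 < measEntropy (fullShift A) μ)
    (ρ : (ℤ → A) → ℝ) (hρc : ContinuousOn ρ S) (hρp : ∀ x ∈ S, 0 < ρ x)
    (c : ℝ) (hc0 : 0 < c)
    (hc : (c : EReal) < measEntropy (fullShift A) μ / ((∫ x, ρ x ∂μ : ℝ) : EReal)) :
    ∃ ν : MeasureTheory.Measure (ℤ → A), MeasureTheory.IsProbabilityMeasure ν ∧
      MeasureTheory.MeasurePreserving (fullShift A) ν ν ∧ ν Sᶜ = 0 ∧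
      measEntropy (fullShift A) ν = ((c * ∫ x, ρ x ∂ν : ℝ) : EReal) ∧
      StrictlyErgodicOn (fullShift A) (measSupport ν) := by
  have hSc : IsClosed S := hSFT.1.1
  have hS : fullShift A '' S = S := hSFT.1.2
  -- `ρ` only matters on `S`, so a continuous extension to the full shift may replace it
  obtain ⟨g, hg⟩ := ContinuousMap.exists_restrict_eq hSc
    (⟨S.domRestrict ρ, continuousOn_iff_continuous_domRestrict.1 hρc⟩ : C(S, ℝ))
  have hgρ : ∀ x ∈ S, g x = ρ x := fun x hx => congrArg (fun k : C(S, ℝ) => k ⟨x, hx⟩) hg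
  have hgpos : ∀ x ∈ S, 0 < g x := fun x hx => (hgρ x hx).symm ▸ hρp x hx
  have hint : ∀ l : Measure (ℤ → A), l Sᶜ = 0 → ∫ x, ρ x ∂l = ∫ x, g x ∂l := by
    intro l hl
    have hl' : ∀ᵐ x ∂l, x ∈ S := hl
    exact integral_congr_ae (hl'.mono fun x hx => (hgρ x hx).symm)
  have hμS' : ∀ᵐ x ∂μ, x ∈ S := hμS
  have hI : 0 < ∫ x, g x ∂μ := by
    rw [integral_pos_iff_support_of_nonneg_ae (hμS'.mono fun x hx => (hgpos x hx).le)
      (integrable_cont μ g.continuous)]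
    refine lt_of_lt_of_le ?_ (measure_mono_ae (s := S) (ae_of_all _ fun x hx => (hgpos x hx).ne'))
    have h1 : μ S = μ univ := measure_congr (eventuallyEq_univ.2 hμS')
    rw [h1, measure_univ]
    exact one_pos
  rw [hint μ hμS, EReal.lt_div_iff (EReal.coe_pos.2 hI) (EReal.coe_ne_top _), ← EReal.coe_mul,
    measEntropy] at hc
  obtain ⟨P, hP, hPc⟩ : ∃ P : Finset (Set (ℤ → A)), IsMeasPartition P ∧
      c * ∫ x, g x ∂μ < partEntropy (fullShift A) μ P := by
    simp only [lt_iSup_iff] at hc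
    obtain ⟨P, hP, h⟩ := hc
    exact ⟨P, hP, EReal.coe_lt_coe_iff.1 h⟩
  obtain ⟨L, hG⟩ := sft_glues hSFT
  obtain ⟨u, W₀, n₀, rfl, hW₀⟩ := exists_stage hS hG g.continuous hgpos hc0 hμi hμS hP hPc
  obtain ⟨W, n, h1, h2, h3⟩ := exists_tower hS g.continuous hgpos hc0 hG hW₀
  have hT : Tower S g c u W n := ⟨h1, h2, h3⟩
  obtain ⟨ν, hνp, hν, hνX⟩ := exists_invariant hT.isClosed hT.nonempty
    fun x hx i => towerSet_iterate hx i
  have hνS : ν Sᶜ = 0 := measure_mono_null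
    (compl_subset_compl.2 fun x hx => hT.subset hSc hS hG 0 (mem_iInter.1 hx 0)) hνX
  refine ⟨ν, hνp, hν, hνS, ?_, ?_⟩
  · rw [hint ν hνS]
    exact hT.measEntropy_eq hSc hS g.continuous hgpos hc0 hG hν hνX
  · refine strictlyErgodic_of_averages hT.isClosed hν hνX fun f hf ε hε => ?_
    obtain ⟨k, -, -, hk⟩ := (hT.averages_integral hSc hS g.continuous hgpos hc0 hG hν hνX hf
      hε).exists
    exact hk
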